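/- arXiv:1901.06290 — 3 statements merged into one kernel-verified Lean document; each statement's English description precedes it below -/
import Mathlib

section
/- Let X be a compact, locally self-similar metric space whose topological (covering) dimension is n. Then the Hölder dimension of X equals n; that is, every metric space Y that is bi-Hölder homeomorphic to X satisfies dimH(Y) ≥ n, and for every real q > n there exist a metric space Y and a bi-Hölder homeomorphism f : X → Y with dimH(Y) ≤ q. -/
open scoped ENNReal

/-- `X` is locally self-similar: there is `l ≥ 1` such that for every sufficiently large
`R > 1` and every `A ⊆ X` with `diam A ≤ Λ₀ / R`, where `Λ₀ = min 1 (diam X / l)`, there is a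
map `f : A → X` with `R·d(z₁,z₂)/l ≤ d(f z₁, f z₂) ≤ l·R·d(z₁,z₂)` for all `z₁, z₂ ∈ A`. -/
def IsLocSelfSimilar (X : Type*) [MetricSpace X] : Prop :=
  ∃ l : ℝ, 1 ≤ l ∧ ∃ R₀ : ℝ, 1 < R₀ ∧ ∀ R : ℝ, R₀ ≤ R →
    ∀ A : Set X, Metric.diam A ≤ min 1 (Metric.diam (Set.univ : Set X) / l) / R →
      ∃ f : A → X, ∀ z₁ z₂ : A,
        R * dist (z₁ : X) (z₂ : X) / l ≤ dist (f z₁) (f z₂) ∧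
          dist (f z₁) (f z₂) ≤ l * R * dist (z₁ : X) (z₂ : X)

/-- Every open cover of `X` has an open refinement, covering `X`, with multiplicity at most
`m + 1` (no point lies in more than `m + 1` of its members). -/
def CovDimLE (X : Type*) [TopologicalSpace X] (m : ℕ) : Prop :=
  ∀ 𝒜 : Set (Set X), (∀ A ∈ 𝒜, IsOpen A) → (∀ x : X, ∃ A ∈ 𝒜, x ∈ A) →
    ∃ ℬ : Set (Set X), (∀ B ∈ ℬ, IsOpen B) ∧ (∀ x : X, ∃ B ∈ ℬ, x ∈ B) ∧
      (∀ B ∈ ℬ, ∃ A ∈ 𝒜, B ⊆ A) ∧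
      (∀ (x : X) (s : Finset (Set X)), ↑s ⊆ ℬ → (∀ B ∈ s, x ∈ B) → s.card ≤ m + 1)

/-- The topological (covering) dimension of `X` is exactly `n`: `n` is the smallest integer
`m` such that every open cover admits an open refinement with multiplicity at most `m+1`. -/
def IsTopDimEq (X : Type*) [TopologicalSpace X] (n : ℕ) : Prop :=
  CovDimLE X n ∧ ∀ m : ℕ, CovDimLE X m → n ≤ m

/-- There is a `(l, a, b)`-bi-Hölder homeomorphism from `X` onto `Y`. -/
def BiHolderEquivTo (X : Type*) [MetricSpace X] (Y : Type*) [MetricSpace Y] : Prop :=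
  ∃ (l a b : ℝ) (f : X → Y), 0 < l ∧ 0 < a ∧ 0 < b ∧ Function.Surjective f ∧
    ∀ x y : X, (1 / l) * dist x y ^ a ≤ dist (f x) (f y) ∧
      dist (f x) (f y) ≤ l * dist x y ^ b

/-- The Hausdorff dimension of the metric space `Y` (as a whole). -/
noncomputable def dimHSpace (Y : Type*) [MetricSpace Y] : ℝ≥0∞ :=
  dimH (Set.univ : Set Y)

/-!
*Lower bound.* A bi-Hölder homeomorphism from a compact space is a homeomorphism, so it preserves
the covering dimension, and a compact space `Y` whose Hausdorff measure of dimension `m + 1`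
vanishes has covering dimension at most `m`. Indeed, given finitely many centres `x i`, the images
of `Y` under the maps `y ↦ (dist y (x i))_{i ∈ s}` with `m + 1` coordinates are null sets, so for
almost all radii no `m + 1` of the spheres around the `x i` meet. Balls of such radii, each with the
earlier ones removed and then slightly enlarged, overlap at most `m + 1` at a time.

*Upper bound.* A fine open cover of multiplicity `n + 1` yields a cover by `n + 1` colour classes,
each a union of small pieces which keep a positive distance from each other. Local self-similarity
transports this cover to every small ball, and a greedy procedure merges boundedly many of the
resulting local covers. So at each scale `R * ε ^ j` there is such a cover with comparable diameters
and separations and at most `C * B ^ j` pieces per colour. For small `ε` the nerves of these covers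
are joined by bonding maps of Lipschitz constant `1 / 2`, at least between points that represent
close points of `X`; following a point of `X` through the inverse system gives maps `F j` from `X`
to `n`-dimensional polyhedra. For every `0 < s ≤ 1 / 2` the metric
`sup_j s ^ j * dist (F j x) (F j y)` is bi-Hölder equivalent to the given one. Now let `s = 1 / Q`.
A subset of `X` whose image under `F k` has diameter at most `s ^ k` has diameter at most `s ^ k` in
this metric, and the `k`-th nerve splits into
`(C * B ^ k) ^ (n + 1) * (n + 1) * (Q ^ k + 1) ^ n` sets of diameter at most `s ^ k`. Hence the
Hausdorff dimension is at most `n + (n + 1) * log B / log Q`, which tends to `n` as `Q` grows, since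
`B` does not depend on `Q`.
-/

section CoveringDimension

open MeasureTheory Metric

variable {X Y : Type*} {m n : ℕ}

theorem CovDimLE.of_indexed [TopologicalSpace X]
    (h : ∀ 𝒜 : Set (Set X), (∀ A ∈ 𝒜, IsOpen A) → (∀ x, ∃ A ∈ 𝒜, x ∈ A) →
      ∃ (ι : Type*) (V : ι → Set X), (∀ i, IsOpen (V i)) ∧ (∀ x, ∃ i, x ∈ V i) ∧
        (∀ i, ∃ A ∈ 𝒜, V i ⊆ A) ∧
        ∀ (x : X) (s : Finset ι), (∀ i ∈ s, x ∈ V i) → s.card ≤ m + 1) :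
    CovDimLE X m := by
  classical
  intro 𝒜 h𝒜 hcover
  obtain ⟨ι, V, hVo, hVc, hVA, hVm⟩ := h 𝒜 h𝒜 hcover
  refine ⟨Set.range V, Set.forall_mem_range.2 hVo, fun x => Set.exists_range_iff.2 (hVc x),
    Set.forall_mem_range.2 hVA, fun x s hs hx => ?_⟩
  rw [← Set.image_univ, Finset.subset_set_image_iff] at hs
  obtain ⟨s, -, rfl⟩ := hs
  exact Finset.card_image_le.trans
    (hVm x s fun i hi => hx _ (Finset.mem_image_of_mem V hi))

theorem CovDimLE.of_homeomorph [TopologicalSpace X] [TopologicalSpace Y] (e : X ≃ₜ Y)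
    (h : CovDimLE X m) : CovDimLE Y m := by
  refine CovDimLE.of_indexed fun 𝒜 h𝒜 hcover => ?_
  obtain ⟨ℬ, hℬo, hℬc, hℬ𝒜, hℬm⟩ := h ((e ⁻¹' ·) '' 𝒜)
    (Set.forall_mem_image.2 fun A hA => (h𝒜 A hA).preimage e.continuous)
    (fun x => Set.exists_mem_image.2 (hcover (e x)))
  refine ⟨ℬ, fun B => e.symm ⁻¹' B, fun B => (hℬo B B.2).preimage e.symm.continuous,
    fun y => ?_, fun B => ?_, fun y s hy => ?_⟩
  · obtain ⟨B, hB, hyB⟩ := hℬc (e.symm y)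
    exact ⟨⟨B, hB⟩, hyB⟩
  · obtain ⟨_, ⟨A, hA, rfl⟩, hBA⟩ := hℬ𝒜 B B.2
    exact ⟨A, hA, fun y hyB => by simpa using hBA hyB⟩
  · rw [← Finset.card_map (Function.Embedding.subtype (· ∈ ℬ))]
    refine hℬm (e.symm y) _ (fun B hB => ?_) (fun B hB => ?_) <;>
      obtain ⟨B, hBs, rfl⟩ := Finset.mem_map.1 hB
    exacts [B.2, hy B hBs]

theorem IsTopDimEq.of_homeomorph [TopologicalSpace X] [TopologicalSpace Y] (e : X ≃ₜ Y)
    (h : IsTopDimEq X n) : IsTopDimEq Y n :=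
  ⟨h.1.of_homeomorph e, fun m hm => h.2 m (hm.of_homeomorph e.symm)⟩

variable [MetricSpace X] {ι : Type*}

/-- The radii `r` for which the spheres of centre `x i` and radius `r i`, `i ∈ s`, have a common
point; the radii `r i` with `i ∉ s` are arbitrary. -/
def sphereRadii (x : ι → X) (s : Set ι) : Set (ι → ℝ) :=
  {r | ∃ y, ∀ i ∈ s, r i = dist y (x i)}

theorem isClosed_sphereRadii [CompactSpace X] (x : ι → X) (s : Set ι) :
    IsClosed (sphereRadii x s) := by
  have hclosed : IsClosed {p : (ι → ℝ) × X | ∀ i ∈ s, p.1 i = dist p.2 (x i)} := by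
    simp only [Set.ofPred_forall]
    exact isClosed_biInter fun i _ => isClosed_eq (by fun_prop) (by fun_prop)
  convert isClosedMap_fst_of_compactSpace _ hclosed using 1
  ext r
  simp [sphereRadii]

theorem volume_sphereRadii_eq_zero [Fintype ι] [MeasurableSpace X] [BorelSpace X]
    (x : ι → X) (s : Set ι) (h : μH[(s.ncard : ℝ)] (Set.univ : Set X) = 0) :
    volume (sphereRadii x s) = 0 := by
  classical
  let distances : X → s → ℝ := fun y i => dist y (x i)
  have hlip : LipschitzWith 1 distances := LipschitzWith.of_dist_le_mul fun y z => by
    rw [NNReal.coe_one, one_mul, dist_pi_le_iff dist_nonneg]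
    exact fun i => dist_dist_dist_le_left y z (x i)
  have hrange : volume (Set.range distances) = 0 := by
    have hle := hlip.hausdorffMeasure_image_le (d := (s.ncard : ℝ)) (by positivity) Set.univ
    rw [h, mul_zero, Set.image_univ, nonpos_iff_eq_zero] at hle
    rwa [← hausdorffMeasure_pi_real, ← Nat.card_eq_fintype_card, Nat.card_coe_set_eq]
  have hsub : sphereRadii x s ⊆
      MeasurableEquiv.piEquivPiSubtypeProd (fun _ : ι => ℝ) (· ∈ s) ⁻¹'
        (Set.range distances ×ˢ Set.univ) := by
    rintro r ⟨y, hy⟩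
    exact ⟨⟨y, funext fun i => (hy i i.2).symm⟩, trivial⟩
  refine measure_mono_null hsub ?_
  rw [(volume_preserving_piEquivPiSubtypeProd _ _).measure_preimage_equiv,
    Measure.volume_eq_prod, Measure.prod_prod, hrange, zero_mul]

theorem exists_generic_radii [Finite ι] [CompactSpace X] [MeasurableSpace X]
    [BorelSpace X] (h : μH[(m : ℝ)] (Set.univ : Set X) = 0) (x : ι → X) {a b : ℝ} (hab : a < b) :
    ∃ r : ι → ℝ, (∀ i, r i ∈ Set.Ioo a b) ∧ ∃ τ > 0, ∀ (y : X) (s : Finset ι), s.card = m →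
      ∃ i ∈ s, τ ≤ |r i - dist y (x i)| := by
  classical
  cases nonempty_fintype ι
  let bad : Set (ι → ℝ) := ⋃ s ∈ {s : Finset ι | s.card = m}, sphereRadii x s
  have hclosed : IsClosed bad :=
    (Set.toFinite _).isClosed_biUnion fun s _ => isClosed_sphereRadii x s
  have hnull : volume bad = 0 := by
    refine (measure_biUnion_null_iff (Set.to_countable _)).2 fun s hs => ?_
    refine volume_sphereRadii_eq_zero x s ?_
    rwa [Set.ncard_coe_finset, Set.mem_ofPred.1 hs]
  have hbox : volume (Set.univ.pi fun _ : ι => Set.Ioo a b) ≠ 0 := by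
    rw [volume_pi_pi, Finset.prod_ne_zero_iff]
    simpa using fun _ => hab
  obtain ⟨r, hr, hrbad⟩ : ∃ r ∈ Set.univ.pi fun _ : ι => Set.Ioo a b, r ∉ bad :=
    Set.not_subset.1 fun hsub => hbox (measure_mono_null hsub hnull)
  obtain ⟨τ, hτ, hball⟩ := Metric.isOpen_iff.1 hclosed.isOpen_compl r hrbad
  refine ⟨r, fun i => hr i trivial, τ, hτ, fun y s hs => ?_⟩
  by_contra! hnear
  refine hball (a := fun i => if i ∈ s then dist y (x i) else r i) ?_ ?_
  · rw [mem_ball', dist_pi_lt_iff hτ]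
    intro i
    by_cases hi : i ∈ s
    · simpa [hi, Real.dist_eq] using hnear i hi
    · simpa [hi] using hτ
  · exact Set.mem_biUnion (x := s) hs ⟨y, fun i hi => if_pos hi⟩

theorem exists_shell_cover [Finite ι] [LinearOrder ι] (x : ι → X) (r : ι → ℝ) {τ : ℝ} (hτ : 0 < τ)
    (hcover : ∀ y, ∃ i, dist y (x i) ≤ r i)
    (hgeneric : ∀ (y : X) (s : Finset ι), s.card = m → ∃ i ∈ s, τ ≤ |r i - dist y (x i)|) :
    ∃ V : ι → Set X, (∀ i, IsOpen (V i)) ∧ (∀ y, ∃ i, y ∈ V i) ∧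
      (∀ i, V i ⊆ ball (x i) (r i + τ)) ∧
      ∀ (y : X) (s : Finset ι), (∀ i ∈ s, y ∈ V i) → s.card ≤ m := by
  classical
  refine ⟨fun i => ball (x i) (r i + τ) \ ⋃ j ∈ Set.Iio i, closedBall (x j) (r j),
    fun i => isOpen_ball.sdiff ((Set.toFinite _).isClosed_biUnion fun _ _ => isClosed_closedBall),
    fun y => ?_, fun i => Set.sdiff_subset, fun y s hy => ?_⟩
  · obtain ⟨i, hi, hmin⟩ := WellFounded.has_min wellFounded_lt {i | dist y (x i) ≤ r i} (hcover y)
    refine ⟨i, lt_add_of_le_of_pos hi hτ, ?_⟩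
    simpa using fun j hj => not_le.1 fun hle => hmin j hle hj
  -- A point of two shells lies near the sphere of the earlier one, so only the last is exempt.
  · by_contra! hcard
    have hs : s.Nonempty := Finset.card_pos.1 (by omega)
    obtain ⟨J, hJs, hJ⟩ := Finset.exists_subset_card_eq (s := s.erase (s.max' hs)) (n := m)
      (by rw [Finset.card_erase_of_mem (s.max'_mem hs)]; omega)
    obtain ⟨i, hiJ, hi⟩ := hgeneric y J hJ
    have his := Finset.mem_of_mem_erase (hJs hiJ)
    have hin : dist y (x i) < r i + τ := (hy i his).1
    have hout : r i < dist y (x i) := by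
      have := (hy _ (s.max'_mem hs)).2
      simp only [Set.mem_iUnion, not_exists] at this
      simpa using this i (s.lt_max'_of_mem_erase_max' hs (hJs hiJ))
    rw [abs_of_neg (by linarith)] at hi
    linarith

theorem covDimLE_of_hausdorffMeasure_eq_zero [CompactSpace X] [MeasurableSpace X] [BorelSpace X]
    (h : μH[((m + 1 : ℕ) : ℝ)] (Set.univ : Set X) = 0) : CovDimLE X m := by
  refine CovDimLE.of_indexed fun 𝒜 h𝒜 hcover => ?_
  obtain ⟨lam, hlam, hleb⟩ := lebesgue_number_lemma_of_metric_sUnion isCompact_univ h𝒜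
    (fun x _ => Set.mem_sUnion.2 (hcover x))
  obtain ⟨T, -, hTfin, hT⟩ := finite_cover_balls_of_compact (isCompact_univ (X := X))
    (e := lam / 4) (by positivity)
  obtain ⟨k, x, rfl⟩ : ∃ (k : ℕ) (x : Fin k → X), Set.range x = T := by
    obtain ⟨k, e, he⟩ := hTfin.fin_embedding
    exact ⟨k, e, he⟩
  obtain ⟨r, hr, τ, hτ, hgeneric⟩ := exists_generic_radii h x (a := lam / 4) (b := lam / 2)
    (by linarith)
  obtain ⟨V, hVo, hVc, hVball, hVm⟩ := exists_shell_cover x r (τ := min τ (lam / 2))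
    (by positivity)
    (fun y => by
      obtain ⟨i, hi⟩ : ∃ i, dist y (x i) < lam / 4 := by simpa using hT (Set.mem_univ y)
      exact ⟨i, (hi.trans (hr i).1).le⟩)
    (fun y s hs => by
      obtain ⟨i, hi, hτi⟩ := hgeneric y s hs
      exact ⟨i, hi, (min_le_left _ _).trans hτi⟩)
  refine ⟨Fin k, V, hVo, hVc, fun i => ?_, hVm⟩
  obtain ⟨A, hA, hsub⟩ := hleb (x i) trivial
  refine ⟨A, hA, ((hVball i).trans (ball_subset_ball ?_)).trans hsub⟩
  linarith [(hr i).2, min_le_right τ (lam / 2)]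

theorem IsTopDimEq.le_dimHSpace [CompactSpace X] (h : IsTopDimEq X n) :
    (n : ℝ≥0∞) ≤ dimHSpace X := by
  borelize X
  rcases n with _ | m
  · simp
  by_contra hlt
  have hnull : μH[((m + 1 : ℕ) : ℝ)] (Set.univ : Set X) = 0 :=
    hausdorffMeasure_of_dimH_lt (d := ((m + 1 : ℕ) : NNReal)) (by exact_mod_cast not_le.1 hlt)
  have := h.2 m (covDimLE_of_hausdorffMeasure_eq_zero hnull)
  omega

theorem BiHolderEquivTo.nonempty_homeomorph [CompactSpace X] [MetricSpace Y]
    (h : BiHolderEquivTo X Y) : Nonempty (X ≃ₜ Y) := by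
  obtain ⟨l, a, b, f, hl, -, hb, hsurj, hf⟩ := h
  have hinj : Function.Injective f := by
    intro x y hxy
    by_contra hne
    have hpos : 0 < 1 / l * dist x y ^ a := by
      have := dist_pos.2 hne
      positivity
    have := (hf x y).1
    rw [hxy, dist_self] at this
    linarith
  have hcont : Continuous f := by
    refine continuous_iff_continuousAt.2 fun x => tendsto_iff_dist_tendsto_zero.2 ?_
    have hlim : Filter.Tendsto (fun y => l * dist y x ^ b) (nhds x) (nhds 0) := by
      have hc : Continuous fun y => l * dist y x ^ b :=
        continuous_const.mul ((continuous_id.dist continuous_const).rpow_const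
          fun _ => Or.inr hb.le)
      simpa [Real.zero_rpow hb.ne'] using hc.tendsto x
    exact squeeze_zero (fun _ => dist_nonneg) (fun y => (hf y x).2) hlim
  exact ⟨Continuous.homeoOfEquivCompactToT2 (f := Equiv.ofBijective f ⟨hinj, hsurj⟩) hcont⟩

theorem IsTopDimEq.le_dimHSpace_of_biHolderEquivTo [CompactSpace X] [MetricSpace Y]
    (hdim : IsTopDimEq X n) (h : BiHolderEquivTo X Y) : (n : ℝ≥0∞) ≤ dimHSpace Y := by
  obtain ⟨e⟩ := h.nonempty_homeomorph
  have : CompactSpace Y := e.compactSpace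
  exact (hdim.of_homeomorph e).le_dimHSpace

end CoveringDimension

section ColoredCovers

universe u

variable {X : Type u} [PseudoMetricSpace X] {S T : Set X} {n : ℕ} {δ δ' D D' τ : ℝ}

/-- The set `S` splits into pieces, the traces on `S` of the fibres of `κ`, of diameter at most `D`
and at mutual distance at least `δ`. -/
def SeparatedPieces (S : Set X) (δ D : ℝ) : Prop :=
  ∃ (ι : Type u) (κ : X → ι), (∀ x ∈ S, ∀ y ∈ S, dist x y < δ → κ x = κ y) ∧
    ∀ x ∈ S, ∀ y ∈ S, κ x = κ y → dist x y ≤ D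

theorem SeparatedPieces.mono (h : SeparatedPieces S δ D) (hδ : δ' ≤ δ) (hD : D ≤ D') :
    SeparatedPieces S δ' D' := by
  obtain ⟨ι, κ, hsep, hdiam⟩ := h
  exact ⟨ι, κ, fun x hx y hy hxy => hsep x hx y hy (hxy.trans_le hδ),
    fun x hx y hy hκ => (hdiam x hx y hy hκ).trans hD⟩

/-- The point `t ∈ T` lies within `δ` of `x`, or of a point in the same piece of `S` as `x`, the
pieces of `S` being labelled by `κ`. In a union `S ∪ T`, such an `x` joins the piece of `t`. -/
def IsAbsorbed {ι : Type*} (S T : Set X) (κ : X → ι) (δ : ℝ) (x t : X) : Prop :=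
  t ∈ T ∧ ∃ y, (y = x ∨ x ∈ S ∧ y ∈ S ∧ κ x = κ y) ∧ dist y t < δ

section IsAbsorbed

variable {ι : Type*} {κ : X → ι} {x x' t t' : X}

theorem isAbsorbed_of_dist_lt (ht : t ∈ T) (hxt : dist x t < δ) : IsAbsorbed S T κ δ x t :=
  ⟨ht, x, .inl rfl, hxt⟩

theorem IsAbsorbed.dist_le (hD : 0 ≤ D) (hκ : ∀ x ∈ S, ∀ y ∈ S, κ x = κ y → dist x y ≤ D)
    (h : IsAbsorbed S T κ δ x t) : dist x t ≤ D + δ := by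
  obtain ⟨-, y, rfl | ⟨hx, hy, hxy⟩, hyt⟩ := h
  · linarith
  · linarith [dist_triangle x y t, hκ x hx y hy hxy]

theorem IsAbsorbed.dist_lt (hD : 0 ≤ D) (hκ : ∀ x ∈ S, ∀ y ∈ S, κ x = κ y → dist x y ≤ D)
    (h : IsAbsorbed S T κ δ x t) (h' : IsAbsorbed S T κ δ x t') : dist t t' < D + 2 * δ := by
  obtain ⟨-, y, hxy, hyt⟩ := h
  obtain ⟨-, y', hxy', hyt'⟩ := h'
  have hyy' : dist y y' ≤ D := by
    rcases hxy with rfl | ⟨hx, hy, hxy⟩ <;> rcases hxy' with rfl | ⟨hx', hy', hxy'⟩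
    exacts [by simpa, hκ _ hx' _ hy' hxy', hκ _ hy _ hx hxy.symm,
      hκ _ hy _ hy' (hxy.symm.trans hxy')]
  linarith [dist_triangle4 t y y' t', dist_comm y t]

theorem IsAbsorbed.exists_common (hδ : 0 < δ)
    (hκ : ∀ x ∈ S, ∀ y ∈ S, dist x y < δ → κ x = κ y) (hx : x ∈ S ∪ T) (hx' : x' ∈ S ∪ T)
    (hxx' : dist x x' < δ) (h : IsAbsorbed S T κ δ x t) :
    ∃ t', IsAbsorbed S T κ δ x t' ∧ IsAbsorbed S T κ δ x' t' := by
  rcases hx' with hx' | hx'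
  · rcases hx with hx | hx
    · obtain ⟨ht, y, hxy, hyt⟩ := h
      have hxx' := hκ x hx x' hx' hxx'
      refine ⟨t, ⟨ht, y, hxy, hyt⟩, ht, y, .inr ⟨hx', ?_⟩, hyt⟩
      rcases hxy with rfl | ⟨-, hy, hxy⟩
      exacts [⟨hx, hxx'.symm⟩, ⟨hy, hxx'.symm.trans hxy⟩]
    · exact ⟨x, isAbsorbed_of_dist_lt hx (by simpa), isAbsorbed_of_dist_lt hx (by rwa [dist_comm])⟩
  · exact ⟨x', isAbsorbed_of_dist_lt hx' hxx', isAbsorbed_of_dist_lt hx' (by simpa)⟩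

end IsAbsorbed

-- A piece of `S` within `δ` of `T` is absorbed by a unique piece of `T`, because the pieces of `T`
-- are further apart than the diameter of a piece of `S`.
theorem SeparatedPieces.union (hδ : 0 < δ) (hD : 0 ≤ D) (hD' : 0 ≤ D')
    (hS : SeparatedPieces S δ D) (hT : SeparatedPieces T τ D') (hτ : D + 2 * δ ≤ τ) :
    SeparatedPieces (S ∪ T) δ (D' + 2 * D + 2 * δ) := by
  obtain ⟨ι, κ, hsep, hdiam⟩ := hS
  obtain ⟨ι', κ', hsep', hdiam'⟩ := hT
  let absorber (x : X) : Set ι' := {i | ∃ t, IsAbsorbed S T κ δ x t ∧ κ' t = i}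
  let remainder (x : X) : Set ι := {i | (∀ t, ¬IsAbsorbed S T κ δ x t) ∧ κ x = i}
  have mem_left : ∀ x ∈ S ∪ T, (∀ t, ¬IsAbsorbed S T κ δ x t) → x ∈ S := fun x hx h =>
    hx.resolve_right fun hxT => h x (isAbsorbed_of_dist_lt hxT (by simpa))
  have absorber_subset : ∀ x ∈ S ∪ T, ∀ x' ∈ S ∪ T, dist x x' < δ →
      absorber x ⊆ absorber x' := by
    rintro x hx x' hx' hxx' _ ⟨t, ht, rfl⟩
    obtain ⟨t', hxt', hx't'⟩ := ht.exists_common hδ hsep hx hx' hxx'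
    exact ⟨t', hx't', hsep' t' hx't'.1 t ht.1 ((hxt'.dist_lt hD hdiam ht).trans_le hτ)⟩
  have remainder_subset : ∀ x ∈ S ∪ T, ∀ x' ∈ S ∪ T, dist x x' < δ →
      remainder x ⊆ remainder x' := by
    rintro x hx x' hx' hxx' _ ⟨h, rfl⟩
    have h' : ∀ t, ¬IsAbsorbed S T κ δ x' t := fun t ht => by
      obtain ⟨t', -, hxt'⟩ := ht.exists_common hδ hsep hx' hx (by rwa [dist_comm])
      exact h t' hxt'
    exact ⟨h', (hsep x (mem_left x hx h) x' (mem_left x' hx' h') hxx').symm⟩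
  refine ⟨Set ι' × Set ι, fun x => (absorber x, remainder x), fun x hx x' hx' hxx' => ?_,
    fun x hx x' hx' hκ => ?_⟩
  · have hx'x : dist x' x < δ := by rwa [dist_comm]
    exact Prod.ext
      ((absorber_subset x hx x' hx' hxx').antisymm (absorber_subset x' hx' x hx hx'x))
      ((remainder_subset x hx x' hx' hxx').antisymm (remainder_subset x' hx' x hx hx'x))
  · obtain ⟨habs, hrem⟩ := Prod.mk.inj hκ
    by_cases h : ∃ t, IsAbsorbed S T κ δ x t
    · obtain ⟨t, ht⟩ := h
      obtain ⟨t', ht', htt'⟩ : κ' t ∈ absorber x' := habs ▸ ⟨t, ht, rfl⟩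
      linarith [dist_triangle4 x t t' x', dist_comm x' t', ht.dist_le hD hdiam,
        ht'.dist_le hD hdiam, hdiam' t ht.1 t' ht'.1 htt'.symm]
    · have hx₀ : κ x ∈ remainder x := ⟨not_exists.1 h, rfl⟩
      obtain ⟨h', hxx'⟩ : κ x ∈ remainder x' := hrem ▸ hx₀
      linarith [hdiam x (mem_left x hx hx₀.1) x' (mem_left x' hx' h') hxx'.symm]

/-- The set `Z` is covered by `n + 1` sets, one for each colour in `Fin (n + 1)`, each of which
splits into `δ`-separated pieces of diameter at most `D`. -/
def ColoredCover (n : ℕ) (Z : Set X) (δ D : ℝ) : Prop :=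
  ∃ S : Fin (n + 1) → Set X, Z ⊆ ⋃ c, S c ∧ ∀ c, SeparatedPieces (S c) δ D

theorem ColoredCover.mono {Z : Set X} (h : ColoredCover n Z δ D) (hδ : δ' ≤ δ) (hD : D ≤ D') :
    ColoredCover n Z δ' D' := by
  obtain ⟨S, hZ, hS⟩ := h
  exact ⟨S, hZ, fun c => (hS c).mono hδ hD⟩

theorem ColoredCover.union {Z Z' : Set X} (hδ : 0 < δ) (hD : 0 ≤ D) (hD' : 0 ≤ D')
    (hZ : ColoredCover n Z δ D) (hZ' : ColoredCover n Z' τ D') (hτ : D + 2 * δ ≤ τ) :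
    ColoredCover n (Z ∪ Z') δ (D' + 2 * D + 2 * δ) := by
  obtain ⟨S, hZS, hS⟩ := hZ
  obtain ⟨T, hZT, hT⟩ := hZ'
  refine ⟨fun c => S c ∪ T c, ?_, fun c => (hS c).union hδ hD hD' (hT c) hτ⟩
  rw [Set.iUnion_union_distrib]
  exact Set.union_subset_union hZS hZT

theorem exists_step_of_multiplicity_le {α : Type*} {ℬ : Set (Set α)} {K : ℕ → Set α}
    (hK : Monotone K) (hmult : ∀ s : Finset (Set α), ↑s ⊆ ℬ → (∀ B ∈ s, K 0 ⊆ B) → s.card ≤ n + 1)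
    {B₀ : Set α} (hB₀ : B₀ ∈ ℬ) (hKB₀ : K (n + 1) ⊆ B₀) :
    ∃ c : Fin (n + 1), ∀ B ∈ ℬ, K c ⊆ B → K (c + 1) ⊆ B := by
  classical
  by_contra! h
  choose b hbℬ hKb hbK using h
  have hinj : Function.Injective b := fun c c' hcc' => by
    by_contra hne'
    rcases lt_or_gt_of_ne hne' with hlt | hlt
    · exact hbK c ((hK hlt).trans (hcc' ▸ hKb c'))
    · exact hbK c' ((hK hlt).trans (hcc' ▸ hKb c))
  have hB₀b : B₀ ∉ Finset.univ.image b := fun hmem => by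
    obtain ⟨c, -, rfl⟩ := Finset.mem_image.1 hmem
    exact hbK c ((hK c.2).trans hKB₀)
  have hcard := hmult (insert B₀ (Finset.univ.image b))
    (by simp [Set.insert_subset_iff, hB₀, Set.range_subset_iff, hbℬ])
    (by simpa using ⟨(hK (Nat.zero_le _)).trans hKB₀,
      fun c => (hK (Nat.zero_le _)).trans (hKb c)⟩)
  rw [Finset.card_insert_of_notMem hB₀b, Finset.card_image_of_injective _ hinj,
    Finset.card_univ, Fintype.card_fin] at hcard
  omega

theorem CovDimLE.exists_lebesgue_cover [CompactSpace X] (h : CovDimLE X n) (hD : 0 < D) :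
    ∃ ℬ : Set (Set X), (∀ B ∈ ℬ, ∀ x ∈ B, ∀ y ∈ B, dist x y ≤ D) ∧
      (∀ (x : X) (s : Finset (Set X)), ↑s ⊆ ℬ → (∀ B ∈ s, x ∈ B) → s.card ≤ n + 1) ∧
      ∃ lam > 0, ∀ x, ∃ B ∈ ℬ, Metric.ball x lam ⊆ B := by
  obtain ⟨ℬ, hℬo, hℬc, hℬball, hℬm⟩ := h (Set.range fun x => Metric.ball x (D / 2))
    (Set.forall_mem_range.2 fun x => Metric.isOpen_ball)
    (fun x => ⟨_, ⟨x, rfl⟩, Metric.mem_ball_self (by positivity)⟩)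
  obtain ⟨lam, hlam, hleb⟩ := lebesgue_number_lemma_of_metric_sUnion isCompact_univ hℬo
    (fun x _ => Set.mem_sUnion.2 (hℬc x))
  refine ⟨ℬ, fun B hB x hx y hy => ?_, hℬm, lam, hlam, fun x => hleb x trivial⟩
  obtain ⟨_, ⟨z, rfl⟩, hBz⟩ := hℬball B hB
  linarith [Metric.mem_ball.1 (hBz hx), Metric.mem_ball.1 (hBz hy), dist_triangle_right x y z]

-- A point gets the colour `c` if no member of a fine cover contains its ball of radius `c * δ` but
-- not the one of radius `(c + 1) * δ`; its piece is the set of members containing these balls.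
theorem CovDimLE.exists_coloredCover [CompactSpace X] (h : CovDimLE X n) (hD : 0 < D) :
    ∃ δ > 0, ColoredCover n (Set.univ : Set X) δ D := by
  obtain ⟨ℬ, hdiam, hℬm, lam, hlam, hleb⟩ := h.exists_lebesgue_cover hD
  set δ : ℝ := lam / (n + 2) with hδ_def
  have hδ : 0 < δ := by positivity
  have hmono : ∀ x : X, Monotone fun k : ℕ => Metric.closedBall x (k * δ) := fun x k l hkl =>
    Metric.closedBall_subset_closedBall (by gcongr)
  have hdeep : ∀ x, ∃ B ∈ ℬ, Metric.closedBall x (((n + 1 : ℕ) : ℝ) * δ) ⊆ B := by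
    intro x
    obtain ⟨B, hB, hsub⟩ := hleb x
    refine ⟨B, hB, (Metric.closedBall_subset_ball ?_).trans hsub⟩
    rw [hδ_def, mul_div_assoc', div_lt_iff₀ (by positivity)]
    push_cast
    nlinarith
  refine ⟨δ, hδ, fun c => {x | ∀ B ∈ ℬ, Metric.closedBall x ((c : ℕ) * δ) ⊆ B →
    Metric.closedBall x (((c + 1 : ℕ) : ℝ) * δ) ⊆ B}, fun x _ => ?_, fun c => ⟨Set (Set X),
    fun x => {B ∈ ℬ | Metric.closedBall x (((c + 1 : ℕ) : ℝ) * δ) ⊆ B}, ?_, ?_⟩⟩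
  · obtain ⟨B, hB, hxB⟩ := hdeep x
    exact Set.mem_iUnion.2 <| exists_step_of_multiplicity_le (hmono x)
      (fun s hs hx => hℬm x s hs fun B hB => hx B hB (Metric.mem_closedBall_self (by simp)))
      hB hxB
  · have hsub : ∀ x y : X, dist y x < δ →
        Metric.closedBall y ((c : ℕ) * δ) ⊆ Metric.closedBall x (((c + 1 : ℕ) : ℝ) * δ) :=
      fun x y hxy => Metric.closedBall_subset_closedBall' (by push_cast; linarith)
    refine fun x hx y hy hxy => Set.Subset.antisymm ?_ ?_ <;> rintro B ⟨hB, hBsub⟩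
    · exact ⟨hB, hy B hB ((hsub x y (by rwa [dist_comm])).trans hBsub)⟩
    · exact ⟨hB, hx B hB ((hsub y x hxy).trans hBsub)⟩
  · intro x _ y _ hκ
    obtain ⟨B, hB, hxB⟩ := hdeep x
    have hxB' := (hmono x c.2).trans hxB
    have hyB' := ((Set.ext_iff.1 hκ B).1 ⟨hB, hxB'⟩).2
    exact hdiam B hB x (hxB' (Metric.mem_closedBall_self (by positivity)))
      y (hyB' (Metric.mem_closedBall_self (by positivity)))

end ColoredCovers

section UniformColoring

universe u

variable {X : Type u} [PseudoMetricSpace X] {S A : Set X} {n : ℕ} {δ δ' D D' : ℝ}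

theorem SeparatedPieces.comap {f : X → X} (hS : SeparatedPieces S δ' D')
    (hsep : ∀ x ∈ A, ∀ y ∈ A, dist x y < δ → dist (f x) (f y) < δ')
    (hdiam : ∀ x ∈ A, ∀ y ∈ A, dist (f x) (f y) ≤ D' → dist x y ≤ D) :
    SeparatedPieces (A ∩ f ⁻¹' S) δ D := by
  obtain ⟨ι, κ, hκsep, hκdiam⟩ := hS
  exact ⟨ι, κ ∘ f, fun x hx y hy hxy => hκsep _ hx.2 _ hy.2 (hsep x hx.1 y hy.1 hxy),
    fun x hx y hy hxy => hdiam x hx.1 y hy.1 (hκdiam _ hx.2 _ hy.2 hxy)⟩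

theorem SeparatedPieces.iUnion {α : Type u} {S Z : α → Set X} (hδ : 0 < δ)
    (hS : ∀ a, SeparatedPieces (S a) δ D)
    (hfar : ∀ a b, a ≠ b → ∀ x ∈ Z a, ∀ y ∈ Z b, δ ≤ dist x y) :
    SeparatedPieces (⋃ a, Z a ∩ S a) δ D := by
  choose ι κ hsep hdiam using hS
  have eq_of_dist_lt : ∀ a b, ∀ x ∈ Z a, ∀ y ∈ Z b, dist x y < δ → a = b :=
    fun a b x hx y hy hxy => by_contra fun hab => (hfar a b hab x hx y hy).not_gt hxy
  let label (x : X) : Set (Σ a, ι a) := {p | x ∈ Z p.1 ∧ κ p.1 x = p.2}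
  have label_eq : ∀ a, ∀ x ∈ Z a, label x = {⟨a, κ a x⟩} := by
    rintro a x hx
    refine Set.eq_singleton_iff_unique_mem.2 ⟨⟨hx, rfl⟩, ?_⟩
    rintro ⟨b, i⟩ ⟨hxb, rfl : κ b x = i⟩
    obtain rfl := eq_of_dist_lt a b x hx x hxb (by simpa)
    rfl
  simp only [SeparatedPieces, Set.mem_iUnion]
  refine ⟨_, label, ?_, ?_⟩ <;> rintro x ⟨a, hxZ, hxS⟩ y ⟨b, hyZ, hyS⟩ hxy
  · obtain rfl := eq_of_dist_lt a b x hxZ y hyZ hxy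
    rw [label_eq a x hxZ, label_eq a y hyZ, hsep a x hxS y hyS hxy]
  · rw [label_eq a x hxZ, label_eq b y hyZ, Set.singleton_eq_singleton_iff, Sigma.mk.injEq] at hxy
    obtain ⟨rfl, hκ⟩ := hxy
    exact hdiam a x hxS y hyS (eq_of_heq hκ)

theorem ColoredCover.comap {f : X → X} (hS : ColoredCover n (Set.univ : Set X) δ' D')
    (hsep : ∀ x ∈ A, ∀ y ∈ A, dist x y < δ → dist (f x) (f y) < δ')
    (hdiam : ∀ x ∈ A, ∀ y ∈ A, dist (f x) (f y) ≤ D' → dist x y ≤ D) :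
    ColoredCover n A δ D := by
  obtain ⟨S, hcover, hS⟩ := hS
  refine ⟨fun c => A ∩ f ⁻¹' S c, fun x hx => ?_, fun c => (hS c).comap hsep hdiam⟩
  obtain ⟨c, hc⟩ := Set.mem_iUnion.1 (hcover (Set.mem_univ (f x)))
  exact Set.mem_iUnion.2 ⟨c, hx, hc⟩

theorem ColoredCover.iUnion {α : Type u} {Z : α → Set X} (hδ : 0 < δ)
    (hZ : ∀ a, ColoredCover n (Z a) δ D)
    (hfar : ∀ a b, a ≠ b → ∀ x ∈ Z a, ∀ y ∈ Z b, δ ≤ dist x y) :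
    ColoredCover n (⋃ a, Z a) δ D := by
  choose S hcover hS using hZ
  refine ⟨fun c => ⋃ a, Z a ∩ S a c, fun x hx => ?_,
    fun c => SeparatedPieces.iUnion hδ (fun a => hS a c) hfar⟩
  obtain ⟨a, ha⟩ := Set.mem_iUnion.1 hx
  obtain ⟨c, hc⟩ := Set.mem_iUnion.1 (hcover a ha)
  exact Set.mem_iUnion.2 ⟨c, Set.mem_iUnion.2 ⟨a, ha, hc⟩⟩

/-- At every scale `r ≤ r₀`, all sets in `𝒵 r` have coloured covers with pieces of diameter at
most `D * r`, for any given `D`, and at mutual distance at least `δ * r`, where `δ` depends only on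
`D`. -/
def UniformlyColorable (n : ℕ) (r₀ : ℝ) (𝒵 : ℝ → Set (Set X)) : Prop :=
  ∀ D > 0, ∃ δ > 0, ∀ r, 0 < r → r ≤ r₀ → ∀ Z ∈ 𝒵 r, ColoredCover n Z (δ * r) (D * r)

variable {r₀ : ℝ} {𝒵 𝒵' : ℝ → Set (Set X)}

theorem UniformlyColorable.union (h : UniformlyColorable n r₀ 𝒵)
    (h' : UniformlyColorable n r₀ 𝒵') :
    UniformlyColorable n r₀ fun r => Set.image2 (· ∪ ·) (𝒵 r) (𝒵' r) := by
  intro D hD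
  obtain ⟨τ, hτ, hcoarse⟩ := h' (D / 2) (by positivity)
  obtain ⟨δ, hδ, hfine⟩ := h (min (τ / 2) (D / 8)) (by positivity)
  refine ⟨min δ (min (τ / 4) (D / 8)), by positivity, ?_⟩
  rintro r hr hrr₀ _ ⟨Z, hZ, Z', hZ', rfl⟩
  have hD₁τ := min_le_left (τ / 2) (D / 8)
  have hD₁D := min_le_right (τ / 2) (D / 8)
  have hδτ : min δ (min (τ / 4) (D / 8)) ≤ τ / 4 := (min_le_right _ _).trans (min_le_left _ _)
  have hδD : min δ (min (τ / 4) (D / 8)) ≤ D / 8 := (min_le_right _ _).trans (min_le_right _ _)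
  have hfine' := (hfine r hr hrr₀ Z hZ).mono
    (mul_le_mul_of_nonneg_right (min_le_left δ (min (τ / 4) (D / 8))) hr.le) le_rfl
  exact (hfine'.union (by positivity) (by positivity) (by positivity)
    (hcoarse r hr hrr₀ Z' hZ') (by nlinarith)).mono le_rfl (by nlinarith)

theorem UniformlyColorable.biUnion_lt (h : UniformlyColorable n r₀ 𝒵) (M : ℕ) :
    UniformlyColorable n r₀ fun r =>
      {Z | ∃ W : ℕ → Set X, (∀ i, W i ∈ 𝒵 r) ∧ Z = ⋃ i < M, W i} := by
  induction M with
  | zero =>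
    refine fun _ _ => ⟨1, one_pos, ?_⟩
    rintro r - - _ ⟨W, -, rfl⟩
    exact ⟨fun _ => ∅, by simp, fun c => ⟨PUnit, fun _ => ⟨⟩, by simp, by simp⟩⟩
  | succ M ih =>
    intro D hD
    obtain ⟨δ, hδ, hunion⟩ := ih.union h D hD
    refine ⟨δ, hδ, ?_⟩
    rintro r hr hrr₀ _ ⟨W, hW, rfl⟩
    rw [Set.biUnion_lt_succ]
    exact hunion r hr hrr₀ _ ⟨_, ⟨W, hW, rfl⟩, _, hW M, rfl⟩

end UniformColoring

section Rescalings

universe u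

variable {X : Type u}

section Partition

variable [PseudoMetricSpace X] {A : Set X} {N M : ℕ} {e e' : ℝ}

/-- The set `A` splits into `N` (possibly empty) classes of diameter at most `e`, the traces on `A`
of the fibres of `code`. -/
def HasPartition (A : Set X) (N : ℕ) (e : ℝ) : Prop :=
  ∃ code : X → Fin N, ∀ x ∈ A, ∀ y ∈ A, code x = code y → dist x y ≤ e

theorem HasPartition.of_fintype {κ : Type*} [Fintype κ] (code : X → κ)
    (h : ∀ x ∈ A, ∀ y ∈ A, code x = code y → dist x y ≤ e) :
    HasPartition A (Fintype.card κ) e :=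
  ⟨Fintype.equivFin κ ∘ code, fun x hx y hy hxy => h x hx y hy <| by simpa using hxy⟩

theorem HasPartition.mono_dist (h : HasPartition A N e) (he : e ≤ e') : HasPartition A N e' := by
  obtain ⟨code, hcode⟩ := h
  exact ⟨code, fun x hx y hy hxy => (hcode x hx y hy hxy).trans he⟩

theorem HasPartition.refine (h : HasPartition A N e)
    (h' : ∀ S ⊆ A, (∀ x ∈ S, ∀ y ∈ S, dist x y ≤ e) → HasPartition S M e') :
    HasPartition A (N * M) e' := by
  obtain ⟨code, hcode⟩ := h
  choose code' hcode' using fun i => h' (A ∩ code ⁻¹' {i}) Set.inter_subset_left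
    fun x hx y hy => hcode x hx.1 y hy.1 (hx.2.trans hy.2.symm)
  have := HasPartition.of_fintype (A := A) (e := e') (fun x => (code x, code' (code x) x))
    fun x hx y hy hxy => by
      obtain ⟨h₁, h₂⟩ := Prod.mk.inj hxy
      exact hcode' _ x ⟨hx, rfl⟩ y ⟨hy, h₁.symm⟩ (h₂.trans (by rw [h₁]))
  simpa using this

theorem HasPartition.card_le (h : HasPartition A N e) {T : Finset X} (hTA : ↑T ⊆ A)
    (hT : (T : Set X).Pairwise fun x y => e < dist x y) : T.card ≤ N := by
  obtain ⟨code, hcode⟩ := h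
  have hinj : Set.InjOn code T := fun x hx y hy hxy => by
    by_contra hne
    exact (hT hx hy hne).not_ge (hcode x (hTA hx) y (hTA hy) hxy)
  simpa using Finset.card_le_card_of_injOn code (fun _ _ => Finset.mem_univ _) hinj

theorem exists_hasPartition_univ [CompactSpace X] (he : 0 < e) :
    ∃ N, HasPartition (Set.univ : Set X) N e := by
  obtain ⟨T, -, hTfin, hT⟩ := finite_cover_balls_of_compact (isCompact_univ (X := X))
    (e := e / 2) (by positivity)
  have : Fintype T := hTfin.fintype
  have hcenter : ∀ x : X, ∃ t : T, dist x t < e / 2 := fun x => by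
    obtain ⟨t, ht, hxt⟩ := Set.mem_iUnion₂.1 (hT (Set.mem_univ x))
    exact ⟨⟨t, ht⟩, hxt⟩
  choose center hcenter using hcenter
  refine ⟨_, HasPartition.of_fintype center fun x _ y _ hxy => ?_⟩
  have hx := hcenter x
  rw [hxy] at hx
  linarith [dist_triangle_right x y (center y), hcenter y]

theorem exists_finset_separated_cover [CompactSpace X] {r : ℝ} (hr : 0 < r) :
    ∃ T : Finset X, (T : Set X).Pairwise (fun t t' => r < dist t t') ∧
      ∀ x, ∃ t ∈ T, dist x t ≤ r := by
  classical
  obtain ⟨N, hN⟩ := exists_hasPartition_univ (X := X) hr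
  let IsSeparated (k : ℕ) : Prop :=
    ∃ T : Finset X, T.card = k ∧ (T : Set X).Pairwise fun t t' => r < dist t t'
  obtain ⟨T, hcard, hT⟩ : IsSeparated (Nat.findGreatest IsSeparated N) :=
    Nat.findGreatest_spec (Nat.zero_le N) ⟨∅, by simp⟩
  refine ⟨T, hT, fun x => ?_⟩
  by_contra! hx
  have hxT : x ∉ T := fun h => absurd (hx x h) (by simpa using hr.le)
  have hinsert : ((insert x T : Finset X) : Set X).Pairwise fun t t' => r < dist t t' := by
    rw [Finset.coe_insert, Set.pairwise_insert]
    exact ⟨hT, fun t ht _ => ⟨hx t ht, dist_comm x t ▸ hx t ht⟩⟩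
  have := Nat.le_findGreatest (P := IsSeparated) (hN.card_le (Set.subset_univ _) hinsert)
    ⟨insert x T, rfl, hinsert⟩
  rw [Finset.card_insert_of_notMem hxT] at this
  omega

end Partition

theorem exists_coloring_of_card_filter_le {α : Type*} {R : α → α → Prop} [DecidableRel R]
    [Std.Symm R] {B : ℕ} (T : Finset α) (hB : ∀ t ∈ T, (T.filter (R t)).card ≤ B) :
    ∃ c : α → Fin (B + 1), (T : Set α).Pairwise fun t t' => R t t' → c t ≠ c t' := by
  classical
  induction T using Finset.induction_on with
  | empty => exact ⟨fun _ => 0, by simp⟩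
  | insert a T haT ih =>
    obtain ⟨c, hc⟩ := ih fun t ht => (Finset.card_le_card
      (Finset.filter_subset_filter _ (Finset.subset_insert a T))).trans
      (hB t (Finset.mem_insert_of_mem ht))
    obtain ⟨k, -, hk⟩ : ∃ k ∈ Finset.univ, k ∉ (T.filter (R a)).image c := by
      refine Finset.exists_mem_notMem_of_card_lt_card (Finset.card_image_le.trans_lt ?_)
      rw [Finset.card_univ, Fintype.card_fin, Nat.lt_succ_iff]
      exact (Finset.card_le_card (Finset.filter_subset_filter _ (Finset.subset_insert a T))).trans
        (hB a (Finset.mem_insert_self a T))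
    have hnew : ∀ t ∈ T, R a t → k ≠ c t := fun t ht hat hkt =>
      hk (Finset.mem_image.2 ⟨t, Finset.mem_filter.2 ⟨ht, hat⟩, hkt.symm⟩)
    refine ⟨Function.update c a k, ?_⟩
    rw [Finset.coe_insert, Set.pairwise_insert]
    have hupdate : ∀ t ∈ T, Function.update c a k t = c t := fun t ht =>
      Function.update_of_ne (ne_of_mem_of_not_mem ht haT) _ _
    refine ⟨fun t ht t' ht' htt' => ?_, fun t ht _ => ?_⟩
    · simpa only [hupdate t ht, hupdate t' ht'] using hc ht ht' htt'
    · rw [hupdate t ht, Function.update_self]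
      exact ⟨hnew t ht, fun hta => (hnew t ht (symm hta)).symm⟩

/-- Every set of diameter at most `a ≤ a₀` can be rescaled into `X` by the factor `1 / a`, up to
the multiplicative distortion `l`. -/
def HasRescalings (X : Type*) [PseudoMetricSpace X] (l a₀ : ℝ) : Prop :=
  ∀ a, 0 < a → a ≤ a₀ → ∀ A : Set X, (∀ x ∈ A, ∀ y ∈ A, dist x y ≤ a) →
    ∃ f : X → X, ∀ x ∈ A, ∀ y ∈ A, dist x y ≤ l * a * dist (f x) (f y) ∧
      dist (f x) (f y) ≤ l / a * dist x y

theorem IsLocSelfSimilar.exists_hasRescalings {X : Type*} [MetricSpace X] [CompactSpace X]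
    [Nontrivial X] (h : IsLocSelfSimilar X) :
    ∃ l a₀ : ℝ, 0 < l ∧ 0 < a₀ ∧ HasRescalings X l a₀ := by
  classical
  obtain ⟨l, hl, R₀, hR₀, hrescale⟩ := h
  have hl0 : 0 < l := by linarith
  have hR0 : 0 < R₀ := by linarith
  have hdiam : 0 < Metric.diam (Set.univ : Set X) :=
    Metric.diam_pos Set.nontrivial_univ isCompact_univ.isBounded
  set Λ := min 1 (Metric.diam (Set.univ : Set X) / l)
  have hΛ : 0 < Λ := by positivity
  refine ⟨max (l / Λ) (l * Λ), Λ / R₀, by positivity, by positivity, fun a ha ha₀ A hA => ?_⟩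
  obtain ⟨f, hf⟩ := hrescale (Λ / a) (by rwa [le_div_comm₀ hR0 ha]) A
    (by rw [div_div_cancel₀ hΛ.ne']; exact Metric.diam_le_of_forall_dist_le ha.le hA)
  refine ⟨fun x => if hx : x ∈ A then f ⟨x, hx⟩ else x, fun x hx y hy => ?_⟩
  simp only [dif_pos hx, dif_pos hy]
  obtain ⟨hlower, hupper⟩ := hf ⟨x, hx⟩ ⟨y, hy⟩
  constructor
  · calc dist x y = l / Λ * a * (Λ / a * dist x y / l) := by field_simp
      _ ≤ l / Λ * a * dist (f ⟨x, hx⟩) (f ⟨y, hy⟩) := by gcongr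
      _ ≤ _ := by gcongr; exact le_max_left _ _
  · refine hupper.trans ?_
    rw [← mul_div_assoc]
    gcongr
    exact le_max_right _ _

variable [PseudoMetricSpace X] [CompactSpace X] {n : ℕ} {l a₀ ε e : ℝ}

theorem HasRescalings.exists_hasPartition (h : HasRescalings X l a₀) (hl : 0 < l) (hε : 0 < ε) :
    ∃ B : ℕ, ∀ a, 0 < a → a ≤ a₀ → ∀ A : Set X, (∀ x ∈ A, ∀ y ∈ A, dist x y ≤ a) →
      HasPartition A B (ε * a) := by
  obtain ⟨B, code, hcode⟩ := exists_hasPartition_univ (X := X) (e := ε / l) (by positivity)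
  refine ⟨B, fun a ha ha₀ A hA => ?_⟩
  obtain ⟨f, hf⟩ := h a ha ha₀ A hA
  refine ⟨code ∘ f, fun x hx y hy hxy => ?_⟩
  calc dist x y ≤ l * a * dist (f x) (f y) := (hf x hx y hy).1
    _ ≤ l * a * (ε / l) := by gcongr; exact hcode _ trivial _ trivial hxy
    _ = ε * a := by field_simp

theorem HasRescalings.exists_hasPartition_pow (h : HasRescalings X l a₀) (hl : 0 < l)
    (ha₀ : 0 < a₀) (hε : 0 < ε) (hε1 : ε ≤ 1) (he : 0 < e) :
    ∃ C B : ℕ, ∀ k : ℕ, HasPartition (Set.univ : Set X) (C * B ^ k) (e * ε ^ k) := by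
  obtain ⟨B, hB⟩ := h.exists_hasPartition hl hε
  obtain ⟨C, hC⟩ := exists_hasPartition_univ (X := X) (e := min e a₀) (by positivity)
  have hpart (k : ℕ) : HasPartition (Set.univ : Set X) (C * B ^ k) (min e a₀ * ε ^ k) := by
    induction k with
    | zero => simpa using hC
    | succ k ih =>
      have hle : min e a₀ * ε ^ k ≤ a₀ :=
        (mul_le_of_le_one_right (by positivity) (pow_le_one₀ hε.le hε1)).trans (min_le_right _ _)
      have := ih.refine fun S _ hS => hB _ (by positivity) hle S hS
      rwa [mul_assoc, ← pow_succ, mul_left_comm, ← pow_succ'] at this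
  exact ⟨C, B, fun k => (hpart k).mono_dist (by gcongr; exact min_le_left _ _)⟩

/-- The unions of closed balls of radius `r` whose centres are more than `4 * r` apart, so that the
balls are more than `2 * r` apart. -/
def sparseBallUnions (X : Type*) [PseudoMetricSpace X] (r : ℝ) : Set (Set X) :=
  {Z | ∃ T : Set X, T.Pairwise (fun t t' => 4 * r < dist t t') ∧
    Z = ⋃ t : T, Metric.closedBall (t : X) r}

theorem HasRescalings.uniformlyColorable_sparseBallUnions (h : HasRescalings X l a₀) (hl : 0 < l)
    (hdim : CovDimLE X n) : UniformlyColorable n (a₀ / 2) (sparseBallUnions X) := by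
  intro D hD
  obtain ⟨δ, hδ, hcover⟩ := hdim.exists_coloredCover (D := D / (2 * l)) (by positivity)
  refine ⟨min 2 (2 * δ / l), by positivity, ?_⟩
  rintro r hr hra _ ⟨T, hT, rfl⟩
  refine ColoredCover.iUnion (by positivity) (fun t => ?_) fun s t hst x hx y hy => ?_
  · obtain ⟨f, hf⟩ := h (2 * r) (by positivity) (by linarith) (Metric.closedBall (t : X) r)
      fun x hx y hy => by
        linarith [Metric.mem_closedBall.1 hx, Metric.mem_closedBall.1 hy, dist_triangle_right x y t]
    refine hcover.comap (f := f) (fun x hx y hy hxy => ?_) fun x hx y hy hxy => ?_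
    · calc dist (f x) (f y) ≤ l / (2 * r) * dist x y := (hf x hx y hy).2
        _ < l / (2 * r) * (2 * δ / l * r) := by
          gcongr
          exact hxy.trans_le (by gcongr; exact min_le_right _ _)
        _ = δ := by field_simp
    · calc dist x y ≤ l * (2 * r) * dist (f x) (f y) := (hf x hx y hy).1
        _ ≤ l * (2 * r) * (D / (2 * l)) := by gcongr
        _ = D * r := by field_simp
  · have hfar := hT s.2 t.2 (Subtype.coe_injective.ne hst)
    calc min 2 (2 * δ / l) * r ≤ 2 * r := by gcongr; exact min_le_left _ _
      _ ≤ dist x y := by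
        linarith [dist_triangle4 (s : X) x y t, Metric.mem_closedBall'.1 hx,
          Metric.mem_closedBall.1 hy]

theorem HasRescalings.exists_colored_separated_cover (h : HasRescalings X l a₀) (hl : 0 < l) :
    ∃ B : ℕ, ∀ r, 0 < r → 8 * r ≤ a₀ → ∃ (T : Finset X) (c : X → Fin (B + 1)),
      (∀ x, ∃ t ∈ T, dist x t ≤ r) ∧
      (T : Set X).Pairwise fun t t' => c t = c t' → 4 * r < dist t t' := by
  classical
  obtain ⟨B, hB⟩ := h.exists_hasPartition hl (ε := 1 / 8) (by norm_num)
  refine ⟨B, fun r hr hra => ?_⟩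
  obtain ⟨T, hsep, hT⟩ := exists_finset_separated_cover (X := X) hr
  have : Std.Symm fun t t' : X => dist t t' ≤ 4 * r := ⟨fun t t' h => (dist_comm t' t).trans_le h⟩
  obtain ⟨c, hc⟩ := exists_coloring_of_card_filter_le (R := fun t t' : X => dist t t' ≤ 4 * r)
    (B := B) T fun t _ => by
      refine (hB (8 * r) (by positivity) hra (Metric.closedBall t (4 * r)) ?_).card_le ?_ ?_
      · intro x hx y hy
        linarith [Metric.mem_closedBall.1 hx, Metric.mem_closedBall.1 hy, dist_triangle_right x y t]
      · intro t' ht'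
        exact Metric.mem_closedBall'.2 (Finset.mem_filter.1 ht').2
      · exact (hsep.mono (Finset.coe_subset.2 (Finset.filter_subset _ T))).imp fun _ _ h => by
          linarith
  exact ⟨T, c, hT, fun t ht t' ht' hne heq => not_le.1 fun hle => hc ht ht' hne hle heq⟩

theorem HasRescalings.exists_coloredCover (h : HasRescalings X l a₀) (hl : 0 < l)
    (hdim : CovDimLE X n) :
    ∃ δ > 0, ∀ r, 0 < r → 8 * r ≤ a₀ → ColoredCover n (Set.univ : Set X) (δ * r) r := by
  obtain ⟨B, hB⟩ := h.exists_colored_separated_cover hl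
  obtain ⟨δ, hδ, hcover⟩ :=
    (h.uniformlyColorable_sparseBallUnions hl hdim).biUnion_lt (B + 1) 1 one_pos
  refine ⟨δ, hδ, fun r hr hra => ?_⟩
  obtain ⟨T, c, hT, hc⟩ := hB r hr hra
  have huniv : (Set.univ : Set X) = ⋃ i < B + 1, ⋃ t : {t | t ∈ T ∧ c t = i},
      Metric.closedBall (t : X) r := by
    refine (Set.eq_univ_of_forall fun x => ?_).symm
    obtain ⟨t, ht, hxt⟩ := hT x
    exact Set.mem_biUnion (c t).2 (Set.mem_iUnion.2 ⟨⟨t, ht, rfl⟩, hxt⟩)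
  rw [← one_mul r, ← mul_assoc, mul_one δ, huniv]
  refine hcover r hr (by linarith) _ ⟨_, fun i => ⟨_, ?_, rfl⟩, rfl⟩
  rintro t ⟨ht, hti⟩ t' ⟨ht', hti'⟩ hne
  exact hc ht ht' hne (Fin.ext (hti.trans hti'.symm))

end Rescalings

section NerveMaps

open Metric

universe u

variable {X : Type u} [PseudoMetricSpace X] {n N N' : ℕ} {K K' ρ ρ' δ D e : ℝ} {x y : X}

/-- The points of the cube `[0, 1] ^ V`, where the set `V` of vertices consists of `N` vertices of
each of `n + 1` colours, which have a coordinate `1` and at most one positive coordinate of each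
colour. This is an `n`-dimensional polyhedron, serving as the nerve of a coloured cover. -/
def coloredNerve (n N : ℕ) : Set (Fin (n + 1) × Fin N → ℝ) :=
  {t | (∀ w, t w ∈ Set.Icc 0 1) ∧ (∃ w, t w = 1) ∧
    ∀ w w', 0 < t w → 0 < t w' → w.1 = w'.1 → w = w'}

/-- The points of the nerve all of whose positive coordinates belong to vertices `w` with `p w`
at distance at most `ρ` from `x`. -/
def nerveNear (p : Fin (n + 1) × Fin N → X) (ρ : ℝ) (x : X) : Set (Fin (n + 1) × Fin N → ℝ) :=
  {t ∈ coloredNerve n N | ∀ w, 0 < t w → dist x (p w) ≤ ρ}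

section nerveNear

variable {p : Fin (n + 1) × Fin N → X} {t t' : Fin (n + 1) × Fin N → ℝ}

theorem isClosed_nerveNear : IsClosed (nerveNear p ρ x) := by
  have hpos (w) : IsOpen {t : Fin (n + 1) × Fin N → ℝ | 0 < t w} :=
    isOpen_lt continuous_const (continuous_apply w)
  simp only [nerveNear, coloredNerve, Set.ofPred_and, Set.ofPred_forall, Set.ofPred_exists]
  refine .inter (.inter ?_ (.inter ?_ ?_)) ?_
  · exact isClosed_iInter fun w => isClosed_Icc.preimage (continuous_apply w)
  · exact isClosed_iUnion_of_finite fun w => isClosed_eq (continuous_apply w) continuous_const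
  · exact isClosed_iInter fun w => isClosed_iInter fun w' => isClosed_imp (hpos w)
      (isClosed_imp (hpos w') isClosed_const)
  · exact isClosed_iInter fun w => isClosed_imp (hpos w) isClosed_const

theorem norm_le_one_of_mem_coloredNerve (ht : t ∈ coloredNerve n N) : ‖t‖ ≤ 1 :=
  (pi_norm_le_iff_of_nonneg zero_le_one).2 fun w =>
    abs_le.2 ⟨by linarith [(ht.1 w).1], (ht.1 w).2⟩

theorem dist_le_one_of_mem_coloredNerve (ht : t ∈ coloredNerve n N) (ht' : t' ∈ coloredNerve n N) :
    dist t t' ≤ 1 :=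
  (dist_pi_le_iff zero_le_one).2 fun w => by
    simpa using Real.dist_le_of_mem_Icc (ht.1 w) (ht'.1 w)

theorem dist_le_of_mem_nerveNear (ht : t ∈ nerveNear p ρ x) (ht' : t' ∈ nerveNear p ρ y)
    (htt' : dist t t' < 1) : dist x y ≤ 2 * ρ := by
  obtain ⟨w, hw⟩ := ht.1.2.1
  have hw' : |t w - t' w| < 1 := (dist_le_pi_dist t t' w).trans_lt htt'
  rw [hw, abs_lt] at hw'
  linarith [dist_triangle_right x y (p w), ht.2 w (by linarith), ht'.2 w (by linarith)]

end nerveNear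

/-- A `K`-Lipschitz map from `X` to the nerve of a coloured cover of `X`, such that vertices with
positive coordinate at `x` have their centre at distance at most `ρ` from `x`. -/
structure NerveMap (X : Type u) [PseudoMetricSpace X] (n N : ℕ) (K ρ : ℝ) where
  center : Fin (n + 1) × Fin N → X
  toFun : X → Fin (n + 1) × Fin N → ℝ
  mem_nerveNear : ∀ x, toFun x ∈ nerveNear center ρ x
  dist_le : ∀ x y, dist (toFun x) (toFun y) ≤ K * dist x y

theorem SeparatedPieces.exists_fin [Nonempty X] {S : Set X} (hS : SeparatedPieces S δ D)
    (hN : HasPartition (Set.univ : Set X) N e) (he : e < δ) :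
    ∃ κ : X → Fin N, (∀ x ∈ S, ∀ y ∈ S, dist x y < δ → κ x = κ y) ∧
      ∀ x ∈ S, ∀ y ∈ S, κ x = κ y → dist x y ≤ D := by
  obtain ⟨ι, κ, hsep, hdiam⟩ := hS
  obtain ⟨code, hcode⟩ := hN
  let representative := Function.invFunOn κ S
  have hmem : ∀ x ∈ S, representative (κ x) ∈ S := fun x hx =>
    Function.invFunOn_mem ⟨x, hx, rfl⟩
  have heq : ∀ x ∈ S, κ (representative (κ x)) = κ x := fun x hx =>
    Function.invFunOn_eq ⟨x, hx, rfl⟩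
  refine ⟨fun x => code (representative (κ x)), fun x hx y hy hxy => ?_, fun x hx y hy hxy => ?_⟩
  · simp only [hsep x hx y hy hxy]
  · have := hsep _ (hmem x hx) _ (hmem y hy) ((hcode _ trivial _ trivial hxy).trans_lt he)
    exact hdiam x hx y hy (by rwa [heq x hx, heq y hy] at this)

theorem ColoredCover.exists_nerveMap [Nonempty X] (h : ColoredCover n (Set.univ : Set X) δ D)
    (hδ : 0 < δ) (hN : HasPartition (Set.univ : Set X) N e) (he : e < δ) :
    Nonempty (NerveMap X n N (2 / δ) (D + δ)) := by
  obtain ⟨S, hcover, hS⟩ := h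
  choose κ hsep hdiam using fun c => (hS c).exists_fin hN he
  let piece : Fin (n + 1) × Fin N → Set X := fun w => {x ∈ S w.1 | κ w.1 x = w.2}
  have hcenter : ∀ w, ∃ p : X, (piece w).Nonempty → p ∈ piece w := fun w =>
    (piece w).eq_empty_or_nonempty.elim (fun h => ⟨Classical.arbitrary X, by simp [h]⟩)
      fun ⟨p, hp⟩ => ⟨p, fun _ => hp⟩
  choose p hp using hcenter
  let bump (w) := thickenedIndicator (half_pos hδ) (piece w)
  have hnear : ∀ x w, 0 < (bump w x : ℝ) → ∃ y ∈ piece w, dist x y < δ / 2 := fun x w hxw => by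
    rw [← mem_thickening_iff]
    by_contra hx
    rw [thickenedIndicator_zero _ _ hx] at hxw
    exact hxw.false
  refine ⟨⟨p, fun x w => bump w x, fun x => ⟨⟨fun w => ?_, ?_, ?_⟩, fun w hxw => ?_⟩,
    fun x y => ?_⟩⟩
  · exact ⟨NNReal.coe_nonneg _, NNReal.coe_le_one.2 (thickenedIndicator_le_one _ _ x)⟩
  · obtain ⟨c, hc⟩ := Set.mem_iUnion.1 (hcover (Set.mem_univ x))
    exact ⟨(c, κ c x), NNReal.coe_eq_one.2 (thickenedIndicator_one _ _ ⟨hc, rfl⟩)⟩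
  · rintro ⟨c, i⟩ ⟨c', i'⟩ hxw hxw' (rfl : c = c')
    obtain ⟨y, ⟨hyS, hyi⟩, hxy⟩ := hnear x _ hxw
    obtain ⟨z, ⟨hzS, hzi⟩, hxz⟩ := hnear x _ hxw'
    have hyz : κ c y = κ c z := hsep c y hyS z hzS (by linarith [dist_triangle_left y z x])
    exact Prod.ext rfl (hyi.symm.trans (hyz.trans hzi))
  · obtain ⟨y, hy, hxy⟩ := hnear x w hxw
    have hpw := hp w ⟨y, hy⟩
    linarith [dist_triangle x y (p w), hdiam w.1 y hy.1 _ hpw.1 (hy.2.trans hpw.2.symm)]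
  · refine (dist_pi_le_iff (by positivity)).2 fun w => ?_
    have := (lipschitzWith_thickenedIndicator (half_pos hδ) (piece w)).dist_le_mul x y
    rwa [NNReal.coe_inv, Real.coe_toNNReal _ (by positivity), inv_div] at this

section Bond

variable (Φ : NerveMap X n N K ρ) {Ψ : NerveMap X n N' K' ρ'}

/-- The bonding map from a finer to a coarser nerve: each vertex of the finer one, with centre
`p w`, contributes a function of slope `1 / 2` in its coordinate, with value `Φ (p w)` where this
coordinate and that of `Φ` are both `1`. -/
noncomputable def NerveMap.bond (p : Fin (n + 1) × Fin N' → X) (t : Fin (n + 1) × Fin N' → ℝ) :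
    Fin (n + 1) × Fin N → ℝ :=
  fun v => Set.projIcc (0 : ℝ) 1 zero_le_one
    (⨆ w : {w // 0 < t w}, (2 * Φ.toFun (p w) v - 1 + t w / 2))

variable {t t' : Fin (n + 1) × Fin N' → ℝ}

theorem NerveMap.abs_sub_le (hK : 0 ≤ K) (hKρ : 16 * K * ρ' ≤ 1) {c : ℝ} (hc : 0 ≤ c)
    (hxy : dist x y ≤ c * ρ') (v : Fin (n + 1) × Fin N) :
    |Φ.toFun x v - Φ.toFun y v| ≤ c / 16 := by
  calc |Φ.toFun x v - Φ.toFun y v| ≤ dist (Φ.toFun x) (Φ.toFun y) :=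
        dist_le_pi_dist (Φ.toFun x) (Φ.toFun y) v
    _ ≤ K * (c * ρ') := (Φ.dist_le x y).trans (by gcongr)
    _ = 16 * K * ρ' * c / 16 := by ring
    _ ≤ 1 * c / 16 := by gcongr
    _ = c / 16 := by rw [one_mul]

theorem NerveMap.bond_mem_nerveNear (hK : 0 ≤ K) (hKρ : 16 * K * ρ' ≤ 1)
    (ht : t ∈ nerveNear Ψ.center ρ' x) : Φ.bond Ψ.center t ∈ nerveNear Φ.center ρ x := by
  have hnear (w) (hw : 0 < t w) (v) :
      |Φ.toFun x v - Φ.toFun (Ψ.center w) v| ≤ 1 / 16 :=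
    Φ.abs_sub_le hK hKρ zero_le_one (by simpa using ht.2 w hw) v
  obtain ⟨⟨ht01, ⟨w₁, hw₁⟩, -⟩, -⟩ := ht
  have : Nonempty {w // 0 < t w} := ⟨w₁, by linarith⟩
  have hpos : ∀ v, 0 < Φ.bond Ψ.center t v → 0 < Φ.toFun x v := fun v hv => by
    obtain ⟨⟨w, hw⟩, hwv⟩ := exists_lt_of_lt_ciSup
      (not_le.1 fun hle => hv.ne' (congrArg Subtype.val (Set.projIcc_of_le_left zero_le_one hle)))
    linarith [(abs_le.1 (hnear w hw v)).1, (ht01 w).2]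
  refine ⟨⟨fun v => Subtype.coe_prop _, ?_, fun v v' hv hv' => ?_⟩, fun v hv => ?_⟩
  · obtain ⟨v, hv⟩ := (Φ.mem_nerveNear x).1.2.1
    refine ⟨v, congrArg Subtype.val (Set.projIcc_of_right_le zero_le_one ?_)⟩
    refine le_ciSup_of_le (Set.finite_range _).bddAbove ⟨w₁, by linarith⟩ ?_
    linarith [(abs_le.1 (hnear w₁ (by linarith) v)).2]
  · exact (Φ.mem_nerveNear x).1.2.2 v v' (hpos v hv) (hpos v' hv')
  · exact (Φ.mem_nerveNear x).2 v (hpos v hv)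

theorem NerveMap.iSup_le_iSup_add (hK : 0 ≤ K) (hKρ : 16 * K * ρ' ≤ 1)
    (ht : t ∈ nerveNear Ψ.center ρ' x) (ht' : t' ∈ nerveNear Ψ.center ρ' y)
    (hxy : dist x y ≤ 2 * ρ') (v : Fin (n + 1) × Fin N) :
    ⨆ w : {w // 0 < t w}, (2 * Φ.toFun (Ψ.center w) v - 1 + t w / 2) ≤
      (⨆ w : {w // 0 < t' w}, (2 * Φ.toFun (Ψ.center w) v - 1 + t' w / 2)) + 1 / 2 * dist t t' := by
  obtain ⟨w₁, hw₁⟩ := ht.1.2.1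
  have : Nonempty {w // 0 < t w} := ⟨w₁, by linarith⟩
  have hle (w : {w // 0 < t' w}) := le_ciSup
    (f := fun w : {w // 0 < t' w} => 2 * Φ.toFun (Ψ.center w) v - 1 + t' w / 2)
    (Set.finite_range _).bddAbove w
  refine ciSup_le fun ⟨w, hw⟩ => ?_
  have htw := (abs_le.1 (dist_le_pi_dist t t' w)).2
  by_cases hw' : 0 < t' w
  · linarith [hle ⟨w, hw'⟩]
  -- A vertex `w` missing from `t'` is compensated by one with coordinate `1`, of nearby centre.
  · obtain ⟨w₂, hw₂⟩ := ht'.1.2.1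
    have hw₂pos : 0 < t' w₂ := by linarith
    have hcenter : dist (Ψ.center w) (Ψ.center w₂) ≤ 4 * ρ' := by
      linarith [dist_triangle4 (Ψ.center w) x y (Ψ.center w₂), dist_comm x (Ψ.center w),
        ht.2 w hw, ht'.2 w₂ hw₂pos]
    linarith [hle ⟨w₂, hw₂pos⟩, (abs_le.1 (Φ.abs_sub_le hK hKρ (by norm_num) hcenter v)).2]

theorem NerveMap.dist_bond_le (hK : 0 ≤ K) (hKρ : 16 * K * ρ' ≤ 1)
    (ht : t ∈ nerveNear Ψ.center ρ' x) (ht' : t' ∈ nerveNear Ψ.center ρ' y)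
    (hxy : dist x y ≤ 2 * ρ') :
    dist (Φ.bond Ψ.center t) (Φ.bond Ψ.center t') ≤ 1 / 2 * dist t t' := by
  refine (dist_pi_le_iff (by positivity)).2 fun v => ?_
  refine (Set.abs_projIcc_sub_projIcc zero_le_one).trans (abs_sub_le_iff.2 ⟨?_, ?_⟩)
  · linarith [Φ.iSup_le_iSup_add hK hKρ ht ht' hxy v]
  · linarith [Φ.iSup_le_iSup_add hK hKρ ht' ht (by rwa [dist_comm]) v, dist_comm t t']

end Bond

/-- The `k`-th approximation of a point of the inverse limit of the maps `g j`: start from the base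
points of level `j + k` and apply the maps down to level `j`. -/
def iterateBond {E : ℕ → Type*} (g : ∀ j, E (j + 1) → E j) (base : ∀ j, E j) :
    ℕ → ∀ j, E j
  | 0, j => base j
  | k + 1, j => g j (iterateBond g base k (j + 1))

theorem exists_forall_eq_of_contracting {E : ℕ → Type*} [∀ j, MetricSpace (E j)]
    [∀ j, CompleteSpace (E j)] (g : ∀ j, E (j + 1) → E j) (C : ∀ j, Set (E j))
    (hne : ∀ j, (C j).Nonempty) (hclosed : ∀ j, IsClosed (C j))
    (hdiam : ∀ j, ∀ s ∈ C j, ∀ t ∈ C j, dist s t ≤ 1)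
    (hmaps : ∀ j, Set.MapsTo (g j) (C (j + 1)) (C j))
    (hcontr : ∀ j, ∀ s ∈ C (j + 1), ∀ t ∈ C (j + 1), dist (g j s) (g j t) ≤ 1 / 2 * dist s t) :
    ∃ F : ∀ j, E j, ∀ j, F j ∈ C j ∧ F j = g j (F (j + 1)) := by
  choose base hbase using hne
  set A := iterateBond g base
  have hA (k) : ∀ j, A k j ∈ C j := by
    induction k with
    | zero => exact hbase
    | succ k ih => exact fun j => hmaps j (ih (j + 1))
  have hstep (k) : ∀ j, dist (A k j) (A (k + 1) j) ≤ 1 * (1 / 2) ^ k := by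
    induction k with
    | zero => exact fun j => by simpa using hdiam j _ (hA 0 j) _ (hA 1 j)
    | succ k ih =>
      intro j
      calc dist (A (k + 1) j) (A (k + 2) j) ≤ 1 / 2 * dist (A k (j + 1)) (A (k + 1) (j + 1)) :=
            hcontr j _ (hA k (j + 1)) _ (hA (k + 1) (j + 1))
        _ ≤ 1 / 2 * (1 * (1 / 2) ^ k) := by gcongr; exact ih (j + 1)
        _ = 1 * (1 / 2) ^ (k + 1) := by ring
  choose F hF using fun j => cauchySeq_tendsto_of_complete
    (cauchySeq_of_le_geometric (1 / 2) 1 (by norm_num) fun k => hstep k j)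
  have hFC (j) : F j ∈ C j := (hclosed j).mem_of_tendsto (hF j) (.of_forall fun k => hA k j)
  refine ⟨F, fun j => ⟨hFC j, ?_⟩⟩
  refine tendsto_nhds_unique ((hF j).comp (Filter.tendsto_add_atTop_nat 1)) ?_
  refine tendsto_iff_dist_tendsto_zero.2 (squeeze_zero (fun _ => dist_nonneg)
    (fun k => hcontr j _ (hA k (j + 1)) _ (hFC (j + 1))) ?_)
  simpa only [mul_zero] using (tendsto_iff_dist_tendsto_zero.1 (hF (j + 1))).const_mul (1 / 2)

end NerveMaps

section ScaleSystems

universe u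

variable {X : Type u}

section NerveMaps

variable [PseudoMetricSpace X] {n : ℕ}

theorem HasRescalings.exists_nerveMap [CompactSpace X] [Nonempty X] {l a₀ : ℝ}
    (h : HasRescalings X l a₀) (hl : 0 < l) (ha₀ : 0 < a₀) (hdim : CovDimLE X n) :
    ∃ (C B : ℕ) (ρ ε : ℝ), 0 < ρ ∧ 0 < ε ∧ ε < 1 ∧
      ∀ j, Nonempty (NerveMap X n (C * B ^ j) (16 * (ρ * ε ^ (j + 1)))⁻¹ (ρ * ε ^ j)) := by
  obtain ⟨δ, hδ, hcover⟩ := h.exists_coloredCover hl hdim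
  obtain ⟨r, hr, hra⟩ : ∃ r, 0 < r ∧ 8 * r = a₀ := ⟨a₀ / 8, by positivity, by ring⟩
  obtain ⟨ε, hε, hε_eq⟩ : ∃ ε, 0 < ε ∧ ε * (32 * (1 + δ)) = δ :=
    ⟨δ / (32 * (1 + δ)), by positivity, by field_simp⟩
  have hε1 : ε < 1 := by nlinarith
  obtain ⟨C, B, hpart⟩ :=
    h.exists_hasPartition_pow hl ha₀ hε hε1.le (e := δ * r / 2) (by positivity)
  refine ⟨C, B, (1 + δ) * r, ε, by positivity, hε, hε1, fun j => ?_⟩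
  have hεj : ε ^ j ≤ 1 := pow_le_one₀ hε.le hε1.le
  have hcover_j := hcover (r * ε ^ j) (by positivity) (by nlinarith)
  have hlipschitz : 2 / (δ * (r * ε ^ j)) = (16 * ((1 + δ) * r * ε ^ (j + 1)))⁻¹ := by
    rw [← inv_div]
    congr 1
    linear_combination -(r * ε ^ j / 2) * hε_eq
  have hradius : r * ε ^ j + δ * (r * ε ^ j) = (1 + δ) * r * ε ^ j := by ring
  rw [← hlipschitz, ← hradius]
  refine hcover_j.exists_nerveMap (by positivity) (hpart j) ?_
  have : 0 < δ * r * ε ^ j := by positivity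
  linarith

theorem exists_compatible_nerve_points {N : ℕ → ℕ} {ρ : ℕ → ℝ} (hρ : ∀ j, 0 < ρ j)
    (Φ : ∀ j, NerveMap X n (N j) (16 * ρ (j + 1))⁻¹ (ρ j)) (x : X) :
    ∃ F : ∀ j, Fin (n + 1) × Fin (N j) → ℝ, ∀ j, F j ∈ nerveNear (Φ j).center (ρ j) x ∧
      F j = (Φ j).bond (Φ (j + 1)).center (F (j + 1)) := by
  have hK (j) : (0 : ℝ) ≤ (16 * ρ (j + 1))⁻¹ := by have := hρ (j + 1); positivity
  have hKρ (j) : 16 * (16 * ρ (j + 1))⁻¹ * ρ (j + 1) ≤ 1 := by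
    have := (hρ (j + 1)).ne'
    exact le_of_eq (by field_simp)
  refine exists_forall_eq_of_contracting (fun j => (Φ j).bond (Φ (j + 1)).center)
    (fun j => nerveNear (Φ j).center (ρ j) x) (fun j => ⟨_, (Φ j).mem_nerveNear x⟩)
    (fun j => isClosed_nerveNear) (fun j s hs t ht => dist_le_one_of_mem_coloredNerve hs.1 ht.1)
    (fun j t ht => (Φ j).bond_mem_nerveNear (hK j) (hKρ j) ht) fun j s hs t ht => ?_
  refine (Φ j).dist_bond_le (hK j) (hKρ j) hs ht ?_
  rw [dist_self]
  linarith [hρ (j + 1)]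

end NerveMaps

variable {E : ℕ → Type*} [∀ j, NormedAddCommGroup (E j)] {F : ∀ j, X → E j} {R ε s : ℝ} {x y : X}
  {m : ℕ}

/-- Maps `F j` to unit balls seeing the points of `X` at the scales `R * ε ^ j`: the map `F j`
separates points further apart than this scale, and distances of closer points at least double from
`F (j - 1)` to `F j`. -/
structure IsScaleSystem [PseudoMetricSpace X] (F : ∀ j, X → E j) (R ε : ℝ) : Prop where
  norm_le_one : ∀ j x, ‖F j x‖ ≤ 1
  one_le_dist : ∀ j x y, R * ε ^ j < dist x y → 1 ≤ dist (F j x) (F j y)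
  dist_le_half : ∀ j x y, dist x y ≤ R * ε ^ (j + 1) →
    dist (F j x) (F j y) ≤ 1 / 2 * dist (F (j + 1) x) (F (j + 1) y)

theorem exists_isScaleSystem_of_nerveMap [PseudoMetricSpace X] {n : ℕ} {N : ℕ → ℕ} {ρ : ℝ}
    (hρ : 0 < ρ) (hε : 0 < ε)
    (Φ : ∀ j, NerveMap X n (N j) (16 * (ρ * ε ^ (j + 1)))⁻¹ (ρ * ε ^ j)) :
    ∃ F : ∀ j, X → Fin (n + 1) × Fin (N j) → ℝ,
      IsScaleSystem F (2 * ρ) ε ∧ ∀ j x, F j x ∈ coloredNerve n (N j) := by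
  choose F hF using exists_compatible_nerve_points (ρ := fun j => ρ * ε ^ j)
    (fun j => by positivity) Φ
  refine ⟨fun j x => F x j, ⟨fun j x => norm_le_one_of_mem_coloredNerve (hF x j).1.1,
    fun j x y hxy => ?_, fun j x y hxy => ?_⟩, fun j x => (hF x j).1.1⟩
  · by_contra! hlt
    linarith [dist_le_of_mem_nerveNear (hF x j).1 (hF y j).1 hlt]
  · rw [(hF x j).2, (hF y j).2]
    refine (Φ j).dist_bond_le (by positivity) ?_ (hF x (j + 1)).1 (hF y (j + 1)).1 (by linarith)
    exact le_of_eq (by field_simp)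

namespace IsScaleSystem

variable [PseudoMetricSpace X]

theorem dist_le_two (hF : IsScaleSystem F R ε) (j : ℕ) (x y : X) : dist (F j x) (F j y) ≤ 2 :=
  (dist_le_norm_add_norm _ _).trans (by linarith [hF.norm_le_one j x, hF.norm_le_one j y])

theorem dist_le_pow_mul (hF : IsScaleSystem F R ε) (hR : 0 ≤ R) (hε : 0 ≤ ε) (hε1 : ε ≤ 1)
    (j k : ℕ) (hxy : dist x y ≤ R * ε ^ (j + k)) :
    dist (F j x) (F j y) ≤ (1 / 2) ^ k * dist (F (j + k) x) (F (j + k) y) := by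
  induction k with
  | zero => simp
  | succ k ih =>
    have hmono : R * ε ^ (j + (k + 1)) ≤ R * ε ^ (j + k) := by
      gcongr ?_ * ?_
      exact pow_le_pow_of_le_one hε hε1 (by lia)
    calc dist (F j x) (F j y) ≤ (1 / 2) ^ k * dist (F (j + k) x) (F (j + k) y) :=
          ih (hxy.trans hmono)
      _ ≤ (1 / 2) ^ k * (1 / 2 * dist (F (j + k + 1) x) (F (j + k + 1) y)) := by
          gcongr
          exact hF.dist_le_half (j + k) x y hxy
      _ = (1 / 2) ^ (k + 1) * dist (F (j + (k + 1)) x) (F (j + (k + 1)) y) := by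
          rw [pow_succ, mul_assoc, add_assoc]

variable [∀ j, NormedSpace ℝ (E j)]

/-- The map `x ↦ (s ^ j • F j x)_j` into the bounded sequences, whose image carries the metric
`sup_j s ^ j * dist (F j x) (F j y)`. -/
noncomputable def weightedMap (hF : IsScaleSystem F R ε) (hs : 0 ≤ s) (hs2 : s ≤ 1 / 2) (x : X) :
    lp E ∞ :=
  ⟨fun j => s ^ j • F j x, memℓp_infty ⟨1, by
    rintro _ ⟨j, rfl⟩
    simp only [norm_smul, norm_pow, Real.norm_of_nonneg hs]
    exact mul_le_one₀ (pow_le_one₀ hs (by linarith)) (norm_nonneg _) (hF.norm_le_one j x)⟩⟩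

variable (hF : IsScaleSystem F R ε) {hs : 0 ≤ s} {hs2 : s ≤ 1 / 2}

theorem norm_weightedMap_sub_apply (j : ℕ) :
    ‖(hF.weightedMap hs hs2 x - hF.weightedMap hs hs2 y) j‖ = s ^ j * dist (F j x) (F j y) := by
  rw [lp.coeFn_sub, Pi.sub_apply]
  simp only [weightedMap]
  rw [← smul_sub, norm_smul, norm_pow, Real.norm_of_nonneg hs, dist_eq_norm]

theorem pow_mul_dist_le_dist_weightedMap (j : ℕ) :
    s ^ j * dist (F j x) (F j y) ≤ dist (hF.weightedMap hs hs2 x) (hF.weightedMap hs hs2 y) := by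
  rw [← hF.norm_weightedMap_sub_apply (hs := hs) (hs2 := hs2), dist_eq_norm]
  exact lp.norm_apply_le_norm ENNReal.top_ne_zero _ j

theorem dist_weightedMap_le {c : ℝ} (h : ∀ j, s ^ j * dist (F j x) (F j y) ≤ c) :
    dist (hF.weightedMap hs hs2 x) (hF.weightedMap hs hs2 y) ≤ c := by
  have hc : 0 ≤ c := (by positivity : 0 ≤ s ^ 0 * dist (F 0 x) (F 0 y)).trans (h 0)
  rw [dist_eq_norm]
  exact lp.norm_le_of_forall_le hc fun j => (hF.norm_weightedMap_sub_apply j).trans_le (h j)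

theorem pow_le_dist_weightedMap (hxy : R * ε ^ m < dist x y) :
    s ^ m ≤ dist (hF.weightedMap hs hs2 x) (hF.weightedMap hs hs2 y) :=
  (le_mul_of_one_le_right (by positivity) (hF.one_le_dist m x y hxy)).trans
    (hF.pow_mul_dist_le_dist_weightedMap m)

theorem dist_weightedMap_le_four_mul (hR : 0 ≤ R) (hε : 0 ≤ ε) (hε1 : ε ≤ 1)
    (hxy : ∀ j < m, dist x y ≤ R * ε ^ j) :
    dist (hF.weightedMap hs hs2 x) (hF.weightedMap hs hs2 y) ≤ 4 * (1 / 2) ^ m := by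
  refine hF.dist_weightedMap_le fun j => ?_
  have hsj : s ^ j ≤ (1 / 2) ^ j := by gcongr
  rcases lt_or_ge j m with hjm | hmj
  · obtain ⟨k, rfl⟩ := Nat.exists_eq_add_of_lt hjm
    calc s ^ j * dist (F j x) (F j y)
        ≤ (1 / 2) ^ j * ((1 / 2) ^ k * dist (F (j + k) x) (F (j + k) y)) := by
          gcongr
          exact hF.dist_le_pow_mul hR hε hε1 j k (hxy (j + k) (by lia))
      _ ≤ (1 / 2) ^ j * ((1 / 2) ^ k * 2) := by gcongr; exact hF.dist_le_two _ _ _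
      _ = 4 * (1 / 2) ^ (j + k + 1) := by ring
  · calc s ^ j * dist (F j x) (F j y) ≤ (1 / 2) ^ j * 2 := by gcongr; exact hF.dist_le_two _ _ _
      _ ≤ (1 / 2) ^ m * 4 := by
          gcongr ?_ * ?_
          · exact pow_le_pow_of_le_one (by norm_num) (by norm_num) hmj
          · norm_num
      _ = 4 * (1 / 2) ^ m := mul_comm _ _

theorem dist_weightedMap_le_pow (hR : 0 ≤ R) (hε : 0 ≤ ε) (hε1 : ε ≤ 1)
    (hm : m ≠ 0) (hxy : dist (F m x) (F m y) ≤ s ^ m) :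
    dist (hF.weightedMap hs hs2 x) (hF.weightedMap hs hs2 y) ≤ s ^ m := by
  have hclose : dist x y ≤ R * ε ^ m := by
    by_contra! hlt
    exact (pow_lt_one₀ hs (by linarith) hm).not_ge ((hF.one_le_dist m x y hlt).trans hxy)
  refine hF.dist_weightedMap_le fun j => ?_
  rcases le_or_gt j m with hjm | hmj
  · obtain ⟨k, rfl⟩ := Nat.exists_eq_add_of_le hjm
    calc s ^ j * dist (F j x) (F j y)
        ≤ 1 * ((1 / 2) ^ k * dist (F (j + k) x) (F (j + k) y)) := by
          gcongr
          · exact pow_le_one₀ hs (by linarith)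
          · exact hF.dist_le_pow_mul hR hε hε1 j k hclose
      _ ≤ 1 * (1 * s ^ (j + k)) := by
          gcongr
          exact pow_le_one₀ (by norm_num) (by norm_num)
      _ = s ^ (j + k) := by rw [one_mul, one_mul]
  · calc s ^ j * dist (F j x) (F j y) ≤ s ^ (m + 1) * 2 := by
          gcongr ?_ * ?_
          · exact pow_le_pow_of_le_one hs (by linarith) hmj
          · exact hF.dist_le_two _ _ _
      _ = s ^ m * (s * 2) := by ring
      _ ≤ s ^ m := mul_le_of_le_one_right (by positivity) (by linarith)

end IsScaleSystem

theorem biHolderEquivTo_range_of_scales [MetricSpace X] {Y : Type*} [MetricSpace Y] {f : X → Y}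
    {K C t : ℝ} (hR : 0 < R) (hK : 0 < K) (hε : 0 < ε) (hε1 : ε < 1) (hs : 0 < s)
    (hs1 : s < 1) (ht : 0 < t) (ht1 : t < 1)
    (h : ∀ x y, x ≠ y → ∃ m : ℕ, (R * ε ^ m ≤ dist x y ∧ dist x y ≤ K * ε ^ m) ∧
      s ^ m ≤ dist (f x) (f y) ∧ dist (f x) (f y) ≤ C * t ^ m) :
    BiHolderEquivTo X (Set.range f) := by
  set a := Real.logb ε s
  set b := Real.logb ε t
  have ha : 0 < a := Real.logb_pos_of_base_lt_one hε hε1 hs hs1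
  have hb : 0 < b := Real.logb_pos_of_base_lt_one hε hε1 ht ht1
  have hεa (m : ℕ) : (ε ^ m) ^ a = s ^ m := by
    rw [← Real.rpow_pow_comm hε.le, Real.rpow_logb hε hε1.ne hs]
  have hεb (m : ℕ) : (ε ^ m) ^ b = t ^ m := by
    rw [← Real.rpow_pow_comm hε.le, Real.rpow_logb hε hε1.ne ht]
  refine ⟨max (K ^ a) (C / R ^ b), a, b, Set.rangeFactorization f, by positivity, ha, hb,
    Set.rangeFactorization_surjective, fun x y => ?_⟩
  rcases eq_or_ne x y with rfl | hxy
  · simp [Real.zero_rpow ha.ne', Real.zero_rpow hb.ne']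
  obtain ⟨m, ⟨hRm, hKm⟩, hsm, htm⟩ := h x y hxy
  constructor
  · rw [one_div_mul_eq_div, div_le_iff₀' (by positivity)]
    calc dist x y ^ a ≤ (K * ε ^ m) ^ a := by gcongr
      _ = K ^ a * s ^ m := by rw [Real.mul_rpow hK.le (by positivity), hεa]
      _ ≤ max (K ^ a) (C / R ^ b) * dist (f x) (f y) := by gcongr; exact le_max_left _ _
  · calc dist (f x) (f y) ≤ C * t ^ m := htm
      _ = C / R ^ b * (R * ε ^ m) ^ b := by
          rw [Real.mul_rpow hR.le (by positivity), hεb]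
          field_simp
      _ ≤ max (K ^ a) (C / R ^ b) * dist x y ^ b := by gcongr; exact le_max_right _ _

theorem exists_pow_lt_and_forall_lt_le (hR : 0 < R) (hε1 : ε < 1) {d : ℝ} (hd : 0 < d) :
    ∃ m, R * ε ^ m < d ∧ ∀ j < m, d ≤ R * ε ^ j := by
  have hex : ∃ m, R * ε ^ m < d := by
    obtain ⟨m, hm⟩ := exists_pow_lt_of_lt_one (div_pos hd hR) hε1
    exact ⟨m, by rwa [lt_div_iff₀' hR] at hm⟩
  exact ⟨Nat.find hex, Nat.find_spec hex, fun j hj => not_lt.1 (Nat.find_min hex hj)⟩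

theorem IsScaleSystem.biHolderEquivTo_range_weightedMap [∀ j, NormedSpace ℝ (E j)]
    [MetricSpace X] [BoundedSpace X] (hF : IsScaleSystem F R ε) (hR : 0 < R) (hε : 0 < ε)
    (hε1 : ε < 1) (hs : 0 < s) (hs2 : s ≤ 1 / 2) :
    BiHolderEquivTo X (Set.range (hF.weightedMap hs.le hs2)) := by
  set K := max (R / ε) (Metric.diam (Set.univ : Set X))
  refine biHolderEquivTo_range_of_scales (K := K) (C := 4) hR (lt_max_of_lt_left (by positivity))
    hε hε1 hs (by linarith) one_half_pos one_half_lt_one fun x y hxy => ?_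
  obtain ⟨m, hlt, hle⟩ := exists_pow_lt_and_forall_lt_le hR hε1 (dist_pos.2 hxy)
  refine ⟨m, ⟨hlt.le, ?_⟩, hF.pow_le_dist_weightedMap hlt,
    hF.dist_weightedMap_le_four_mul hR.le hε.le hε1.le hle⟩
  rcases m with _ | m
  · rw [pow_zero, mul_one]
    exact (Metric.dist_le_diam_of_mem (Bornology.IsBounded.all _) (Set.mem_univ x)
      (Set.mem_univ y)).trans (le_max_right _ _)
  · calc dist x y ≤ R * ε ^ m := hle m m.lt_succ_self
      _ = R / ε * ε ^ (m + 1) := by rw [pow_succ]; field_simp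
      _ ≤ K * ε ^ (m + 1) := by gcongr; exact le_max_left _ _

end ScaleSystems

section HausdorffDimension

universe u

open MeasureTheory Filter Topology

theorem dimH_le_of_hasPartition {Y : Type*} [MetricSpace Y] {A : Set Y} {N : ℕ → ℕ} {r : ℕ → ℝ}
    {q K : ℝ} (hq : 0 ≤ q) (hr : ∀ k, 0 ≤ r k) (hr0 : Tendsto r atTop (𝓝 0))
    (hA : ∀ᶠ k in atTop, HasPartition A (N k) (r k)) (hK : ∀ k, N k * r k ^ q ≤ K) :
    dimH A ≤ ENNReal.ofReal q := by
  borelize Y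
  have hpiece (k : ℕ) : ∃ S : Fin (N k) → Set Y, HasPartition A (N k) (r k) →
      A ⊆ ⋃ i, S i ∧ ∀ i, Metric.ediam (S i) ≤ ENNReal.ofReal (r k) := by
    by_cases hk : HasPartition A (N k) (r k)
    · obtain ⟨code, hcode⟩ := hk
      refine ⟨fun i => A ∩ code ⁻¹' {i}, fun _ =>
        ⟨fun x hx => Set.mem_iUnion.2 ⟨code x, hx, rfl⟩,
          fun i => Metric.ediam_le fun x hx y hy => ?_⟩⟩
      exact edist_dist x y ▸ ENNReal.ofReal_le_ofReal
        (hcode x hx.1 y hy.1 (hx.2.trans hy.2.symm))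
    · exact ⟨fun _ => ∅, fun h => absurd h hk⟩
  choose S hS using hpiece
  have hr0' : Tendsto (fun k => ENNReal.ofReal (r k)) atTop (𝓝 0) := by
    simpa only [ENNReal.ofReal_zero] using ENNReal.tendsto_ofReal hr0
  have hsum : ∀ᶠ k in atTop, ∑ i, Metric.ediam (S k i) ^ q ≤ ENNReal.ofReal K := by
    filter_upwards [hA] with k hk
    calc ∑ i, Metric.ediam (S k i) ^ q ≤ ∑ _i : Fin (N k), ENNReal.ofReal (r k) ^ q := by
          gcongr with i
          exact (hS k hk).2 i
      _ = ENNReal.ofReal (N k * r k ^ q) := by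
          rw [Finset.sum_const, Finset.card_univ, Fintype.card_fin, nsmul_eq_mul,
            ENNReal.ofReal_rpow_of_nonneg (hr k) hq, ENNReal.ofReal_mul (Nat.cast_nonneg _),
            ENNReal.ofReal_natCast]
      _ ≤ ENNReal.ofReal K := ENNReal.ofReal_le_ofReal (hK k)
  have hfin : μH[q] A ≤ ENNReal.ofReal K :=
    (Measure.hausdorffMeasure_le_liminf_sum q A (fun k => ENNReal.ofReal (r k)) hr0' S
      (hA.mono fun k hk => (hS k hk).2) (hA.mono fun k hk => (hS k hk).1)).trans
      (liminf_le_of_frequently_le' hsum.frequently)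
  refine dimH_le_of_hausdorffMeasure_ne_top (d := q.toNNReal) ?_
  rw [Real.coe_toNNReal q hq]
  exact ne_top_of_le_ne_top ENNReal.ofReal_ne_top hfin

theorem HasPartition.range_of_dist_le {X T Y : Type*} [Nonempty X] [PseudoMetricSpace T]
    [PseudoMetricSpace Y] {A : Set T} {N : ℕ} {e e' : ℝ} {g : X → T} {f : X → Y}
    (h : HasPartition A N e) (hg : ∀ x, g x ∈ A)
    (hgf : ∀ x y, dist (g x) (g y) ≤ e → dist (f x) (f y) ≤ e') :
    HasPartition (Set.range f) N e' := by
  obtain ⟨code, hcode⟩ := h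
  have hinv : ∀ z ∈ Set.range f, f (Function.invFun f z) = z := fun z => Function.invFun_eq
  refine ⟨fun z => code (g (Function.invFun f z)), fun z hz w hw hzw => ?_⟩
  rw [← hinv z hz, ← hinv w hw]
  exact hgf _ _ (hcode _ (hg _) _ (hg _) hzw)

section CountingInNerve

variable {n N m : ℕ} {e : ℝ}

theorem hasPartition_Icc {M : ℕ} (hM : M ≠ 0) :
    HasPartition (Set.Icc (0 : ℝ) 1) (M + 1) (M : ℝ)⁻¹ := by
  have hM0 : (0 : ℝ) < M := by positivity
  have hlt : ∀ a ∈ Set.Icc (0 : ℝ) 1, ⌊M * a⌋₊ < M + 1 := fun a ha => by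
    rw [Nat.lt_succ_iff]
    exact Nat.floor_le_of_le (mul_le_of_le_one_right hM0.le ha.2)
  refine ⟨fun a => Fin.ofNat (M + 1) ⌊M * a⌋₊, fun a ha b hb hab => ?_⟩
  have hfloor : ⌊M * a⌋₊ = ⌊M * b⌋₊ := by
    simpa [Fin.ext_iff, Nat.mod_eq_of_lt (hlt a ha), Nat.mod_eq_of_lt (hlt b hb)] using hab
  have hle_a := Nat.floor_le (mul_nonneg hM0.le ha.1)
  have hlt_a := Nat.lt_floor_add_one (M * a)
  have hle_b := Nat.floor_le (mul_nonneg hM0.le hb.1)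
  have hlt_b := Nat.lt_floor_add_one (M * b)
  rw [hfloor] at hle_a hlt_a
  rw [Real.dist_eq, abs_sub_le_iff, ← one_div, le_div_iff₀' hM0, le_div_iff₀' hM0]
  exact ⟨by linarith, by linarith⟩

theorem exists_vertices_of_mem_coloredNerve {t : Fin (n + 1) × Fin N → ℝ}
    (ht : t ∈ coloredNerve n N) :
    ∃ (v : Fin (n + 1) → Fin N) (c₀ : Fin (n + 1)), t (c₀, v c₀) = 1 ∧
      ∀ c i, i ≠ v c → t (c, i) = 0 := by
  obtain ⟨hIcc, ⟨⟨c₀, i₀⟩, hone⟩, hcolor⟩ := ht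
  have hv : ∀ c, ∃ v, ∀ i, i ≠ v → t (c, i) = 0 := fun c => by
    by_cases hc : ∃ v, 0 < t (c, v)
    · obtain ⟨v, hv⟩ := hc
      refine ⟨v, fun i hi => (hIcc _).1.antisymm' (not_lt.1 fun hpos => hi ?_)⟩
      exact congrArg Prod.snd (hcolor _ _ hpos hv rfl)
    · exact ⟨i₀, fun i _ => (hIcc _).1.antisymm' (not_lt.1 fun hpos => hc ⟨i, hpos⟩)⟩
  choose v hv using hv
  refine ⟨v, c₀, ?_, hv⟩
  by_contra hne
  have : i₀ ≠ v c₀ := fun h => hne (h ▸ hone)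
  exact one_ne_zero (hone.symm.trans (hv c₀ i₀ this))

/-- A point of the nerve is determined by its possible vertex of each colour, a colour at which the
coordinate is `1`, and its coordinates at the other `n` colours. -/
theorem hasPartition_coloredNerve (h : HasPartition (Set.Icc (0 : ℝ) 1) m e) (he : 0 ≤ e)
    (hne : (coloredNerve n N).Nonempty) :
    HasPartition (coloredNerve n N) (N ^ (n + 1) * ((n + 1) * m ^ n)) e := by
  obtain ⟨code, hcode⟩ := h
  have : Nonempty (Fin N) := let ⟨_, ht⟩ := hne; let ⟨w, _⟩ := ht.2.1; ⟨w.2⟩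
  choose! v c₀ hone hzero using fun (t : Fin (n + 1) × Fin N → ℝ)
    (ht : t ∈ coloredNerve n N) => exists_vertices_of_mem_coloredNerve ht
  have := HasPartition.of_fintype (A := coloredNerve n N) (e := e)
    (fun t => (v t, c₀ t, fun i => code (t ((c₀ t).succAbove i, v t ((c₀ t).succAbove i)))))
    fun t ht t' ht' htt' => by
      obtain ⟨hv, hc₀, hcodes⟩ : v t = v t' ∧ c₀ t = c₀ t' ∧ _ := by
        simpa only [Prod.mk.injEq] using htt'
      refine (dist_pi_le_iff he).2 fun ⟨c, i⟩ => ?_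
      by_cases hi : i = v t c
      · subst hi
        rcases eq_or_ne c (c₀ t) with rfl | hc
        · rw [hone t ht, hv, hc₀, hone t' ht', dist_self]
          exact he
        · obtain ⟨j, rfl⟩ := Fin.exists_succAbove_eq hc
          refine hcode _ (ht.1 _) _ (ht'.1 _) ?_
          simpa only [hv, hc₀] using congrFun hcodes j
      · rw [hzero t ht c i hi, hzero t' ht' c i (hv ▸ hi), dist_self]
        exact he
  simpa using this

end CountingInNerve

theorem exists_nat_le_rpow (b : ℝ) {t : ℝ} (ht : 0 < t) : ∃ Q : ℕ, 2 ≤ Q ∧ b ≤ (Q : ℝ) ^ t :=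
  ((eventually_ge_atTop 2).and (((tendsto_rpow_atTop ht).comp
    tendsto_natCast_atTop_atTop).eventually_ge_atTop b)).exists

theorem card_mul_rpow_le {n B Q : ℕ} {q : ℝ} (hQ : 0 < Q)
    (hB : (B : ℝ) ^ (n + 1) ≤ (Q : ℝ) ^ (q - n)) (C k : ℕ) :
    (((C * B ^ k) ^ (n + 1) * ((n + 1) * (Q ^ k + 1) ^ n) : ℕ) : ℝ) * ((Q : ℝ)⁻¹ ^ k) ^ q ≤
      C ^ (n + 1) * (n + 1) * 2 ^ n := by
  have hQ1 : (1 : ℝ) ≤ Q := by exact_mod_cast hQ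
  have hQ0 : (0 : ℝ) < Q := by positivity
  have hQk : (1 : ℝ) ≤ (Q : ℝ) ^ k := one_le_pow₀ hQ1
  have hle_one : (B : ℝ) ^ (n + 1) * (Q : ℝ) ^ n * (Q : ℝ)⁻¹ ^ q ≤ 1 := by
    calc (B : ℝ) ^ (n + 1) * (Q : ℝ) ^ n * (Q : ℝ)⁻¹ ^ q
        ≤ (Q : ℝ) ^ (q - n) * (Q : ℝ) ^ n * (Q : ℝ)⁻¹ ^ q := by gcongr
      _ = 1 := by
          rw [← Real.rpow_natCast, ← Real.rpow_add hQ0, sub_add_cancel, Real.inv_rpow hQ0.le,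
            mul_inv_cancel₀ (by positivity)]
  rw [← Real.rpow_pow_comm (by positivity)]
  push_cast
  calc ((C : ℝ) * B ^ k) ^ (n + 1) * ((n + 1) * ((Q : ℝ) ^ k + 1) ^ n) * ((Q : ℝ)⁻¹ ^ q) ^ k
      ≤ ((C : ℝ) * B ^ k) ^ (n + 1) * ((n + 1) * (2 * (Q : ℝ) ^ k) ^ n) *
          ((Q : ℝ)⁻¹ ^ q) ^ k := by
        gcongr
        linarith
    _ = C ^ (n + 1) * (n + 1) * 2 ^ n * ((B : ℝ) ^ (n + 1) * (Q : ℝ) ^ n * (Q : ℝ)⁻¹ ^ q) ^ k := by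
        simp only [mul_pow, pow_right_comm _ k]
        ring
    _ ≤ C ^ (n + 1) * (n + 1) * 2 ^ n :=
        mul_le_of_le_one_right (by positivity) (pow_le_one₀ (by positivity) hle_one)

theorem IsScaleSystem.dimH_range_weightedMap_le {X : Type*} [PseudoMetricSpace X] [Nonempty X]
    {n B C Q : ℕ} {F : ∀ j, X → Fin (n + 1) × Fin (C * B ^ j) → ℝ} {R ε q : ℝ}
    (hF : IsScaleSystem F R ε) (hR : 0 ≤ R) (hε : 0 ≤ ε) (hε1 : ε ≤ 1)
    (hnerve : ∀ j x, F j x ∈ coloredNerve n (C * B ^ j)) (hQ : 0 < Q) (hq : 0 ≤ q)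
    (hB : (B : ℝ) ^ (n + 1) ≤ (Q : ℝ) ^ (q - n)) (hs2 : (Q : ℝ)⁻¹ ≤ 1 / 2) :
    dimH (Set.range (hF.weightedMap (inv_nonneg.2 Q.cast_nonneg) hs2)) ≤ ENNReal.ofReal q := by
  refine dimH_le_of_hasPartition (r := fun k => (Q : ℝ)⁻¹ ^ k) hq (fun k => by positivity)
    (tendsto_pow_atTop_nhds_zero_of_lt_one (by positivity) (by linarith)) ?_
    (fun k => card_mul_rpow_le hQ hB C k)
  filter_upwards [eventually_ne_atTop 0] with k hk
  have hIcc : HasPartition (Set.Icc (0 : ℝ) 1) (Q ^ k + 1) ((Q : ℝ)⁻¹ ^ k) := by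
    simpa using hasPartition_Icc (M := Q ^ k) (by positivity)
  obtain ⟨x₀⟩ := ‹Nonempty X›
  have hpart := hasPartition_coloredNerve hIcc (by positivity) ⟨_, hnerve k x₀⟩
  exact hpart.range_of_dist_le (hnerve k) fun x y => hF.dist_weightedMap_le_pow hR hε hε1 hk

theorem dimHSpace_coe {Y : Type*} [MetricSpace Y] (A : Set Y) : dimHSpace A = dimH A := by
  rw [dimHSpace, ← isometry_subtype_coe.dimH_image, Set.image_univ, Subtype.range_coe]

variable {X : Type u} [MetricSpace X] {n : ℕ} {q : ℝ}

theorem exists_biHolderEquivTo_dimHSpace_eq_zero [Subsingleton X] :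
    ∃ (Y : Type) (mY : MetricSpace Y), @BiHolderEquivTo X _ Y mY ∧ @dimHSpace Y mY = 0 := by
  refine ⟨Set.range fun _ : X => (), inferInstance, ⟨1, 1, 1, Set.rangeFactorization _, one_pos,
    one_pos, one_pos, Set.rangeFactorization_surjective, fun x y => ?_⟩, ?_⟩
  · simp [Subsingleton.elim x y]
  · exact dimH_subsingleton Set.subsingleton_of_subsingleton

theorem IsLocSelfSimilar.exists_biHolderEquivTo_dimHSpace_le_of_nontrivial [CompactSpace X]
    [Nontrivial X] (hss : IsLocSelfSimilar X) (hdim : CovDimLE X n) (hq : (n : ℝ) < q) :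
    ∃ (Y : Type) (mY : MetricSpace Y),
      @BiHolderEquivTo X _ Y mY ∧ @dimHSpace Y mY ≤ ENNReal.ofReal q := by
  obtain ⟨l, a₀, hl, ha₀, hX⟩ := hss.exists_hasRescalings
  obtain ⟨C, B, ρ, ε, hρ, hε, hε1, hΦ⟩ := hX.exists_nerveMap hl ha₀ hdim
  obtain ⟨F, hF, hnerve⟩ := exists_isScaleSystem_of_nerveMap hρ hε fun j => (hΦ j).some
  obtain ⟨Q, hQ2, hQ⟩ := exists_nat_le_rpow ((B : ℝ) ^ (n + 1)) (sub_pos.2 hq)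
  have hs2 : (Q : ℝ)⁻¹ ≤ 1 / 2 := by
    rw [← one_div]
    gcongr
    exact_mod_cast hQ2
  have hs : 0 < (Q : ℝ)⁻¹ := by positivity
  refine ⟨Set.range (hF.weightedMap hs.le hs2), inferInstance,
    hF.biHolderEquivTo_range_weightedMap (by positivity) hε hε1 hs hs2, ?_⟩
  rw [dimHSpace_coe]
  exact hF.dimH_range_weightedMap_le (by positivity) hε.le hε1.le hnerve (by lia)
    ((Nat.cast_nonneg n).trans hq.le) hQ hs2

theorem IsLocSelfSimilar.exists_biHolderEquivTo_dimHSpace_le [CompactSpace X]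
    (hss : IsLocSelfSimilar X) (hdim : CovDimLE X n) (hq : (n : ℝ) < q) :
    ∃ (Y : Type) (mY : MetricSpace Y),
      @BiHolderEquivTo X _ Y mY ∧ @dimHSpace Y mY ≤ ENNReal.ofReal q := by
  rcases subsingleton_or_nontrivial X
  · obtain ⟨Y, mY, hXY, hY⟩ := exists_biHolderEquivTo_dimHSpace_eq_zero (X := X)
    exact ⟨Y, mY, hXY, hY.trans_le zero_le⟩
  · exact hss.exists_biHolderEquivTo_dimHSpace_le_of_nontrivial hdim hq

end HausdorffDimension

/-- A compact, locally self-similar metric space of topological (covering)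
dimension `n` has Hölder dimension `n`: every metric space bi-Hölder homeomorphic to `X` has
Hausdorff dimension at least `n`, and for every `q > n` there is a metric space bi-Hölder
homeomorphic to `X` with Hausdorff dimension at most `q`. -/
theorem statement3 {X : Type} [MetricSpace X] [CompactSpace X]
    (hss : IsLocSelfSimilar X) (n : ℕ) (hdim : IsTopDimEq X n) :
    (∀ (Y : Type) (mY : MetricSpace Y),
      @BiHolderEquivTo X _ Y mY → (n : ℝ≥0∞) ≤ @dimHSpace Y mY) ∧
    (∀ q : ℝ, (n : ℝ) < q →
      ∃ (Y : Type) (mY : MetricSpace Y),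
        @BiHolderEquivTo X _ Y mY ∧ @dimHSpace Y mY ≤ ENNReal.ofReal q) := by
  exact ⟨fun Y mY h => hdim.le_dimHSpace_of_biHolderEquivTo h,
    fun q hq => hss.exists_biHolderEquivTo_dimHSpace_le hdim.1 hq⟩
end

section
/- Let n ≥ 1, let C ⊆ [0,1] be the standard ternary (1/3-)Cantor set, and let X = C × [0,1]^n ⊆ ℝ^{n+1} with the Euclidean metric. If Y is a metric space and f : X → Y is a (λ,α,β)-bi-Hölder homeomorphism, then dimH(Y) ≥ n + (log 2)/(α·log 3); in particular dimH(Y) > n. -/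
open scoped ENNReal

/-- The set `C × [0,1]^n` inside Euclidean space `ℝ^{n+1}`, where `C` is the standard ternary
Cantor set (coordinate `0`) and the remaining `n` coordinates range over `[0,1]`. -/
def cantorCube (n : ℕ) : Set (EuclideanSpace ℝ (Fin (n + 1))) :=
  {x | x 0 ∈ cantorSet ∧ ∀ i : Fin (n + 1), i ≠ 0 → x i ∈ Set.Icc (0 : ℝ) 1}

/-!
The inverse of `f` is Hölder with exponent `1 / a`, so following it by the projection to `C` and the
Cantor function gives a coordinate `Y → [0,1]` that is Hölder with exponent `log 2 / (a log 3)`. The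
other `n` coordinates are the distances in `Y` to the images of the faces `x i = 0`; unlike
`x i ∘ f⁻¹` they are Lipschitz. On every slice `{c} × [0,1]^n` the Poincaré–Miranda theorem
shows that these distances take all small values simultaneously, so the `n + 1` functions together
map `Y` onto a set containing an open box. They map a set of diameter `d` to a set of volume
`O(d ^ (n + log 2 / (a log 3)))`, so the Hausdorff measure of `Y` in that dimension is positive.

The Poincaré–Miranda theorem is proved combinatorially. Labels on the vertices of a grid are cubical
`0`-cochains mod `2`; by Stokes' theorem the cup product of their coboundaries has total `1` over
the grid, and any cell on which it is nonzero carries both values of every label.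
-/

section CubicalCochains

variable {ι R : Type*} [DecidableEq ι]

lemma sum_sum_erase_eq_zero_of_symm [Ring R] [CharP R 2] (S : Finset ι) {a : ι → ι → R}
    (ha : ∀ j k, a j k = a k j) : ∑ j ∈ S, ∑ k ∈ S.erase j, a j k = 0 := by
  rw [Finset.sum_sigma']
  refine Finset.sum_involution (fun p _ => ⟨p.2, p.1⟩) ?_ ?_ ?_ fun _ _ => rfl
  · rintro ⟨j, k⟩ _
    rw [ha k j, CharTwo.add_self_eq_zero]
  · rintro ⟨j, k⟩ hjk _ heq
    rw [Finset.mem_sigma, Finset.mem_erase] at hjk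
    exact hjk.2.1 (congrArg Sigma.fst heq)
  · rintro ⟨j, k⟩ hjk
    simp only [Finset.mem_sigma, Finset.mem_erase] at hjk ⊢
    exact ⟨hjk.2.2, hjk.2.1.symm, hjk.1⟩

/-- The cup product `δχ_{i₁} ⌣ ⋯ ⌣ δχ_{iₖ}` of the coboundaries of the cubical `0`-cochains `χ i`,
`L = [i₁, …, iₖ]`, evaluated on the cube with lowest vertex `v` and edge directions `S`. There are
no signs, so this is the usual product only in characteristic two, and it is only meaningful when
`S` has as many elements as `L`. -/
def coboundaryCup [Ring R] (χ : ι → (ι → ℕ) → R) : List ι → Finset ι → (ι → ℕ) → R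
  | [], _, _ => 1
  | i :: L, S, v => ∑ j ∈ S,
      (χ i (v + Pi.single j 1) - χ i v) * coboundaryCup χ L (S.erase j) (v + Pi.single j 1)

/-- The Leibniz rule `δ(χ ⌣ c) = δχ ⌣ c + χ ⌣ δc`. -/
lemma sum_mul_sub_mul_coboundaryCup [Ring R] (χ : ι → (ι → ℕ) → R) (i : ι) (L : List ι)
    (S : Finset ι) (v : ι → ℕ) :
    ∑ j ∈ S, (χ i (v + Pi.single j 1) * coboundaryCup χ L (S.erase j) (v + Pi.single j 1)
        - χ i v * coboundaryCup χ L (S.erase j) v) =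
      coboundaryCup χ (i :: L) S v + χ i v * ∑ j ∈ S,
        (coboundaryCup χ L (S.erase j) (v + Pi.single j 1) - coboundaryCup χ L (S.erase j) v) := by
  rw [coboundaryCup, Finset.mul_sum, ← Finset.sum_add_distrib]
  refine Finset.sum_congr rfl fun j _ => ?_
  noncomm_ring

lemma sum_coboundaryCup_sub_eq_zero [Ring R] [CharP R 2] (χ : ι → (ι → ℕ) → R) (L : List ι)
    (S : Finset ι) (v : ι → ℕ) :
    ∑ j ∈ S, (coboundaryCup χ L (S.erase j) (v + Pi.single j 1)
      - coboundaryCup χ L (S.erase j) v) = 0 := by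
  induction L generalizing S v with
  | nil => simp [coboundaryCup]
  | cons i L ih =>
    have stokes (S : Finset ι) (v : ι → ℕ) : coboundaryCup χ (i :: L) S v =
        ∑ k ∈ S, (χ i (v + Pi.single k 1) * coboundaryCup χ L (S.erase k) (v + Pi.single k 1)
          - χ i v * coboundaryCup χ L (S.erase k) v) := by
      rw [sum_mul_sub_mul_coboundaryCup, ih, mul_zero, add_zero]
    simp only [stokes, ← Finset.sum_sub_distrib]
    refine sum_sum_erase_eq_zero_of_symm S fun j k => ?_
    rw [add_right_comm v (Pi.single k 1), Finset.erase_right_comm (a := k)]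
    abel

lemma coboundaryCup_cons [Ring R] [CharP R 2] (χ : ι → (ι → ℕ) → R) (i : ι) (L : List ι)
    (S : Finset ι) (v : ι → ℕ) :
    coboundaryCup χ (i :: L) S v =
      ∑ j ∈ S, (χ i (v + Pi.single j 1) * coboundaryCup χ L (S.erase j) (v + Pi.single j 1)
        - χ i v * coboundaryCup χ L (S.erase j) v) := by
  rw [sum_mul_sub_mul_coboundaryCup, sum_coboundaryCup_sub_eq_zero, mul_zero, add_zero]

lemma coboundaryCup_eq_zero_of_forall_eq [Ring R] {χ : ι → (ι → ℕ) → R} {j : ι} {m : ℕ} {c : R}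
    (hχ : ∀ v, v j = m → χ j v = c) {L : List ι} (hL : j ∈ L) {S : Finset ι} (hS : j ∉ S)
    {v : ι → ℕ} (hv : v j = m) : coboundaryCup χ L S v = 0 := by
  induction L generalizing S v with
  | nil => simp at hL
  | cons i L ih =>
    refine Finset.sum_eq_zero fun k hk => ?_
    have hjk : j ≠ k := fun h => hS (h ▸ hk)
    have hvk : (v + Pi.single k 1 : ι → ℕ) j = m := by simp [hjk, hv]
    rcases List.mem_cons.1 hL with rfl | hL
    · rw [hχ _ hv, hχ _ hvk, sub_self, zero_mul]
    · rw [ih hL (fun h => hS (Finset.mem_of_mem_erase h)) hvk, mul_zero]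

lemma exists_ne_of_coboundaryCup_ne_zero [Ring R] {χ : ι → (ι → ℕ) → R} {L : List ι}
    {S : Finset ι} {v : ι → ℕ} (hχ : coboundaryCup χ L S v ≠ 0) {i : ι} (hi : i ∈ L) :
    ∃ p ∈ Set.Icc v (v + ∑ j ∈ S, Pi.single j 1), ∃ q ∈ Set.Icc v (v + ∑ j ∈ S, Pi.single j 1),
      χ i p ≠ χ i q := by
  induction L generalizing S v with
  | nil => simp at hi
  | cons a L ih =>
    rw [coboundaryCup] at hχ
    obtain ⟨j, hj, hne⟩ := Finset.exists_ne_zero_of_sum_ne_zero hχ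
    have hle : v ≤ v + Pi.single j 1 := le_self_add
    have htop : v + Pi.single j 1 + ∑ k ∈ S.erase j, Pi.single k 1 =
        v + ∑ k ∈ S, (Pi.single k 1 : ι → ℕ) := by
      rw [add_assoc, Finset.add_sum_erase S (fun k => (Pi.single k 1 : ι → ℕ)) hj]
    rcases List.mem_cons.1 hi with rfl | hi
    · refine ⟨v + Pi.single j 1, ⟨hle, ?_⟩, v, ⟨le_rfl, le_self_add⟩,
        sub_ne_zero.1 (left_ne_zero_of_mul hne)⟩
      exact htop ▸ le_self_add
    · obtain ⟨p, hp, q, hq, hpq⟩ := ih (right_ne_zero_of_mul hne) hi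
      rw [htop] at hp hq
      exact ⟨p, ⟨hle.trans hp.1, hp.2⟩, q, ⟨hle.trans hq.1, hq.2⟩, hpq⟩

variable [Fintype ι]

lemma sum_piFinset_update_range {M : Type*} [AddCommMonoid M] (t : ι → Finset ℕ) (j : ι) (N : ℕ)
    (F : (ι → ℕ) → M) :
    ∑ v ∈ Fintype.piFinset (Function.update t j (Finset.range N)), F v =
      ∑ k ∈ Finset.range N, ∑ v ∈ Fintype.piFinset (Function.update t j {k}), F v := by
  set T := Function.update t j (Finset.range N) with hT
  have hTj : T j = Finset.range N := Function.update_self ..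
  have hmaps : ∀ v ∈ Fintype.piFinset T, v j ∈ Finset.range N := fun v hv =>
    hTj ▸ Fintype.mem_piFinset.1 hv j
  rw [← Finset.sum_fiberwise_of_maps_to hmaps]
  refine Finset.sum_congr rfl fun k hk => ?_
  rw [← Fintype.piFinset_update_singleton_eq_filter_piFinset_eq T j (hTj ▸ hk), hT,
    Function.update_idem]

lemma sum_piFinset_update_singleton_add_single {M : Type*} [AddCommMonoid M] (t : ι → Finset ℕ)
    (j : ι) (k : ℕ) (F : (ι → ℕ) → M) :
    ∑ v ∈ Fintype.piFinset (Function.update t j {k}), F (v + Pi.single j 1) =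
      ∑ v ∈ Fintype.piFinset (Function.update t j {k + 1}), F v := by
  refine Finset.sum_nbij' (· + Pi.single j 1) (· - Pi.single j 1) ?_ ?_ ?_ ?_ fun _ _ => rfl
  · intro v hv
    rw [Fintype.mem_piFinset] at hv ⊢
    intro i
    have := hv i
    by_cases hij : i = j
    · subst hij; simp_all
    · simpa [hij] using this
  · intro v hv
    rw [Fintype.mem_piFinset] at hv ⊢
    intro i
    have := hv i
    by_cases hij : i = j
    · subst hij; simp_all
    · simpa [hij] using this
  · intro v _
    exact add_tsub_cancel_right v _
  · intro v hv
    have hvj : v j = k + 1 := by simpa using Fintype.mem_piFinset.1 hv j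
    refine tsub_add_cancel_of_le fun i => ?_
    by_cases hij : i = j
    · subst hij; simp [hvj]
    · simp [hij]

lemma sum_piFinset_update_range_sub {M : Type*} [AddCommGroup M] (t : ι → Finset ℕ) (j : ι)
    (N : ℕ) (F : (ι → ℕ) → M) :
    ∑ v ∈ Fintype.piFinset (Function.update t j (Finset.range N)), (F (v + Pi.single j 1) - F v) =
      ∑ v ∈ Fintype.piFinset (Function.update t j {N}), F v
        - ∑ v ∈ Fintype.piFinset (Function.update t j {0}), F v := by
  rw [sum_piFinset_update_range, ← Finset.sum_range_sub
    (fun k => ∑ v ∈ Fintype.piFinset (Function.update t j {k}), F v)]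
  refine Finset.sum_congr rfl fun k _ => ?_
  rw [Finset.sum_sub_distrib, sum_piFinset_update_singleton_add_single]

lemma sum_coboundaryCup_cons [Ring R] [CharP R 2] (χ : ι → (ι → ℕ) → R) (i : ι) (L : List ι)
    {S : Finset ι} {t : ι → Finset ℕ} {N : ℕ} (ht : ∀ j ∈ S, t j = Finset.range N) :
    ∑ v ∈ Fintype.piFinset t, coboundaryCup χ (i :: L) S v =
      ∑ j ∈ S, (∑ v ∈ Fintype.piFinset (Function.update t j {N}),
          χ i v * coboundaryCup χ L (S.erase j) v
        - ∑ v ∈ Fintype.piFinset (Function.update t j {0}),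
          χ i v * coboundaryCup χ L (S.erase j) v) := by
  simp only [coboundaryCup_cons]
  rw [Finset.sum_comm]
  refine Finset.sum_congr rfl fun j hj => ?_
  rw [← sum_piFinset_update_range_sub t j N fun v => χ i v * coboundaryCup χ L (S.erase j) v,
    ← ht j hj, Function.update_eq_self]

/-- By Stokes' theorem the sum is a sum over faces, of which only the face `v i = N`, with `i` the
head of `L`, contributes. -/
lemma sum_coboundaryCup_eq_one [Ring R] [CharP R 2] {χ : ι → (ι → ℕ) → R} {N : ℕ}
    (h0 : ∀ i v, v i = 0 → χ i v = 0) (h1 : ∀ i v, v i = N → χ i v = 1) {L : List ι}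
    (hL : L.Nodup) {t : ι → Finset ℕ} (ht : ∀ j ∈ L, t j = Finset.range N)
    (ht' : ∀ j ∉ L, (t j).card = 1) :
    ∑ v ∈ Fintype.piFinset t, coboundaryCup χ L L.toFinset v = 1 := by
  induction L generalizing t with
  | nil => simp_all [coboundaryCup]
  | cons i L ih =>
    obtain ⟨hi, hL⟩ := List.nodup_cons.1 hL
    have coord_eq {j : ι} {m : ℕ} {v : ι → ℕ}
        (hv : v ∈ Fintype.piFinset (Function.update t j {m})) : v j = m := by
      simpa using Fintype.mem_piFinset.1 hv j
    have side_face_eq_zero {j : ι} (hj : j ∈ L) {m : ℕ} {c : R} (hc : ∀ v, v j = m → χ j v = c) :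
        ∑ v ∈ Fintype.piFinset (Function.update t j {m}),
          χ i v * coboundaryCup χ L ((i :: L).toFinset.erase j) v = 0 :=
      Finset.sum_eq_zero fun v hv => by
        rw [coboundaryCup_eq_zero_of_forall_eq hc hj (Finset.notMem_erase j _) (coord_eq hv),
          mul_zero]
    have bottom_face_eq_zero : ∑ v ∈ Fintype.piFinset (Function.update t i {0}),
        χ i v * coboundaryCup χ L ((i :: L).toFinset.erase i) v = 0 :=
      Finset.sum_eq_zero fun v hv => by rw [h0 i v (coord_eq hv), zero_mul]
    rw [sum_coboundaryCup_cons χ i L fun j hj => ht j (List.mem_toFinset.1 hj),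
      Finset.sum_eq_single_of_mem i (by simp), bottom_face_eq_zero, sub_zero,
      ← ih hL (t := Function.update t i {N})]
    · refine Finset.sum_congr rfl fun v hv => ?_
      rw [h1 i v (coord_eq hv), one_mul, List.toFinset_cons,
        Finset.erase_insert (mt List.mem_toFinset.1 hi)]
    · intro j hj
      rw [Function.update_of_ne (ne_of_mem_of_not_mem hj hi), ht j (List.mem_cons_of_mem i hj)]
    · intro j hj
      by_cases hji : j = i
      · simp [hji]
      · rw [Function.update_of_ne hji, ht' j (by simp [hji, hj])]
    · intro j hjS hji
      have hj : j ∈ L := by simpa [hji] using hjS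
      rw [side_face_eq_zero hj (h1 j), side_face_eq_zero hj (h0 j), sub_zero]

end CubicalCochains

section PoincareMiranda

open Filter

variable {ι : Type*}

theorem exists_cell_of_boundary_labels [Finite ι] {N : ℕ} (P : ι → (ι → ℕ) → Prop)
    (h0 : ∀ i v, v i = 0 → ¬ P i v) (h1 : ∀ i v, v i = N → P i v) :
    ∃ v : ι → ℕ, (∀ i, v i < N) ∧
      ∀ i, ∃ p ∈ Set.Icc v (v + 1), ∃ q ∈ Set.Icc v (v + 1), ¬ P i p ∧ P i q := by
  classical
  cases nonempty_fintype ι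
  let χ : ι → (ι → ℕ) → ZMod 2 := fun i v => if P i v then 1 else 0
  have hsum := sum_coboundaryCup_eq_one (χ := χ) (N := N) (fun i v hv => if_neg (h0 i v hv))
    (fun i v hv => if_pos (h1 i v hv)) (Finset.nodup_toList Finset.univ)
    (t := fun _ => Finset.range N) (fun _ _ => rfl) (fun j hj => by simp at hj)
  obtain ⟨v, hv, hne⟩ := Finset.exists_ne_zero_of_sum_ne_zero (hsum.trans_ne one_ne_zero)
  refine ⟨v, fun i => by simpa using Fintype.mem_piFinset.1 hv i, fun i => ?_⟩
  obtain ⟨p, hp, q, hq, hpq⟩ := exists_ne_of_coboundaryCup_ne_zero hne (i := i) (by simp)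
  have hone : ∑ j, (Pi.single j 1 : ι → ℕ) = 1 := Finset.univ_sum_single (1 : ι → ℕ)
  rw [Finset.toList_toFinset, hone] at hp hq
  by_cases hPp : P i p <;> by_cases hPq : P i q
  · simp [χ, hPp, hPq] at hpq
  · exact ⟨q, hq, p, hp, hPq, hPp⟩
  · exact ⟨p, hp, q, hq, hPp, hPq⟩
  · simp [χ, hPp, hPq] at hpq

/-- The point of the unit cube with coordinates `v i / N`, cut off at `1`. -/
noncomputable def gridPoint (N : ℕ) (v : ι → ℕ) : ι → unitInterval :=
  fun i => Set.projIcc 0 1 zero_le_one ((v i : ℝ) / N)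

lemma gridPoint_eq_zero {N : ℕ} {v : ι → ℕ} {i : ι} (hv : v i = 0) : gridPoint N v i = 0 := by
  simp [gridPoint, hv]

lemma gridPoint_eq_one {N : ℕ} (hN : N ≠ 0) {v : ι → ℕ} {i : ι} (hv : v i = N) :
    gridPoint N v i = 1 := by
  simp [gridPoint, hv, hN]

lemma dist_gridPoint_le [Fintype ι] {N : ℕ} {v p : ι → ℕ} (hp : p ∈ Set.Icc v (v + 1)) :
    dist (gridPoint N v) (gridPoint N p) ≤ 1 / N := by
  refine (dist_pi_le_iff (by positivity)).2 fun i => ?_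
  have hpv : |(v i : ℝ) - p i| ≤ 1 := by
    rw [abs_sub_comm, abs_le]
    have h1 : (v i : ℝ) ≤ p i := mod_cast hp.1 i
    have h2 : (p i : ℝ) ≤ v i + 1 := mod_cast hp.2 i
    constructor <;> linarith
  calc dist (gridPoint N v i) (gridPoint N p i)
    _ ≤ |(v i : ℝ) / N - p i / N| := Set.abs_projIcc_sub_projIcc _
    _ = |(v i : ℝ) - p i| / N := by rw [← sub_div, abs_div, Nat.abs_cast]
    _ ≤ 1 / N := by gcongr

theorem poincare_miranda [Finite ι] {G : (ι → unitInterval) → ι → ℝ} (hG : Continuous G)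
    {z : ι → ℝ} (h0 : ∀ x i, x i = 0 → G x i ≤ z i) (h1 : ∀ x i, x i = 1 → z i ≤ G x i) :
    ∃ x, G x = z := by
  cases nonempty_fintype ι
  have hcell (N : ℕ) : ∃ v : ι → ℕ, ∀ i, ∃ p ∈ Set.Icc v (v + 1), ∃ q ∈ Set.Icc v (v + 1),
      G (gridPoint (N + 1) p) i ≤ z i ∧ z i ≤ G (gridPoint (N + 1) q) i := by
    obtain ⟨v, -, hv⟩ := exists_cell_of_boundary_labels (N := N + 1)
      (fun i v => v i ≠ 0 ∧ z i ≤ G (gridPoint (N + 1) v) i) (fun i v hv h => h.1 hv)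
      (fun i v hv => ⟨hv ▸ N.succ_ne_zero, h1 _ i (gridPoint_eq_one N.succ_ne_zero hv)⟩)
    refine ⟨v, fun i => ?_⟩
    obtain ⟨p, hp, q, hq, hpz, -, hqz⟩ := hv i
    refine ⟨p, hp, q, hq, ?_, hqz⟩
    by_cases hpi : p i = 0
    · exact h0 _ i (gridPoint_eq_zero hpi)
    · exact (not_le.1 fun h => hpz ⟨hpi, h⟩).le
  choose v p hp q hq hpz hqz using hcell
  obtain ⟨x, φ, hφ, hx⟩ := CompactSpace.tendsto_subseq fun N => gridPoint (N + 1) (v N)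
  have near {r : ℕ → ι → ℕ} (hr : ∀ N, r N ∈ Set.Icc (v N) (v N + 1)) (i : ι) :
      Tendsto (fun m => G (gridPoint (φ m + 1) (r (φ m))) i) atTop (nhds (G x i)) := by
    have hrx : Tendsto (fun m => gridPoint (φ m + 1) (r (φ m))) atTop (nhds x) :=
      hx.congr_dist (squeeze_zero (fun _ => dist_nonneg) (fun m => dist_gridPoint_le (hr (φ m)))
        (tendsto_one_div_atTop_nhds_zero_nat.comp ((tendsto_add_atTop_nat 1).comp
          hφ.tendsto_atTop)))
    exact ((continuous_pi_iff.1 hG i).tendsto x).comp hrx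
  exact ⟨x, funext fun i => le_antisymm
    (le_of_tendsto' (near (fun N => hp N i) i) fun m => hpz (φ m) i)
    (ge_of_tendsto' (near (fun N => hq N i) i) fun m => hqz (φ m) i)⟩

theorem exists_forall_infDist_eq [Finite ι] {Y : Type*} [PseudoMetricSpace Y]
    {G : (ι → unitInterval) → Y} (hG : Continuous G) {A : ι → Set Y} {δ : ℝ}
    (h0 : ∀ x i, x i = 0 → G x ∈ A i) (h1 : ∀ x i, x i = 1 → δ ≤ Metric.infDist (G x) (A i))
    {z : ι → ℝ} (hz : ∀ i, z i ∈ Set.Icc 0 δ) : ∃ x, ∀ i, Metric.infDist (G x) (A i) = z i := by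
  obtain ⟨x, hx⟩ := poincare_miranda (G := fun x i => Metric.infDist (G x) (A i)) (z := z)
    (continuous_pi fun i => (Metric.continuous_infDist_pt (A i)).comp hG)
    (fun x i hx => (Metric.infDist_zero_of_mem (h0 x i hx)).trans_le (hz i).1)
    (fun x i hx => (hz i).2.trans (h1 x i hx))
  exact ⟨x, congrFun hx⟩

end PoincareMiranda

section HausdorffMeasure

open MeasureTheory Metric
open scoped NNReal

lemma prod_rpow_eq_rpow_sum_of_nonneg {κ : Type*} (S : Finset κ) (x : ℝ≥0∞) {r : κ → ℝ}
    (hr : ∀ i ∈ S, 0 ≤ r i) : ∏ i ∈ S, x ^ r i = x ^ ∑ i ∈ S, r i := by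
  classical
  induction S using Finset.induction_on with
  | empty => simp
  | insert i S hi ih =>
    rw [Finset.forall_mem_insert] at hr
    rw [Finset.prod_insert hi, Finset.sum_insert hi, ih hr.2,
      ENNReal.rpow_add_of_nonneg _ _ hr.1 (Finset.sum_nonneg hr.2)]

variable {Y κ : Type*} [Fintype κ]

lemma volume_image_inter_le_ediam_rpow [PseudoEMetricSpace Y] {Φ : Y → κ → ℝ} {K r : κ → ℝ≥0}
    {s : Set Y} (hΦ : ∀ i, HolderOnWith (K i) (r i) (fun y => Φ y i) s) (t : Set Y) :
    volume (Φ '' (t ∩ s)) ≤ (∏ i, (K i : ℝ≥0∞)) * ediam t ^ (∑ i, (r i : ℝ)) :=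
  calc volume (Φ '' (t ∩ s))
    _ ≤ ∏ i, ediam (Function.eval i '' (Φ '' (t ∩ s))) := Real.volume_pi_le_prod_diam _
    _ ≤ ∏ i, ((K i : ℝ≥0∞) * ediam t ^ (r i : ℝ)) := by
      refine Finset.prod_le_prod' fun i _ => ?_
      rw [Set.image_image]
      exact (hΦ i).ediam_image_inter_le t
    _ = (∏ i, (K i : ℝ≥0∞)) * ediam t ^ (∑ i, (r i : ℝ)) := by
      rw [Finset.prod_mul_distrib, prod_rpow_eq_rpow_sum_of_nonneg _ _ fun i _ => (r i).coe_nonneg]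

theorem volume_image_le_hausdorffMeasure [EMetricSpace Y] [MeasurableSpace Y] [BorelSpace Y]
    {Φ : Y → κ → ℝ} {K r : κ → ℝ≥0} {s : Set Y}
    (hΦ : ∀ i, HolderOnWith (K i) (r i) (fun y => Φ y i) s) :
    volume (Φ '' s) ≤ (∏ i, (K i : ℝ≥0∞)) * μH[∑ i, (r i : ℝ)] s := by
  set c : ℝ≥0∞ := ∏ i, (K i : ℝ≥0∞)
  have hc : c ≠ ∞ := ENNReal.prod_ne_top fun i _ => ENNReal.coe_ne_top
  rcases eq_or_ne c 0 with hc0 | hc0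
  · simpa [hc0, c] using volume_image_inter_le_ediam_rpow hΦ Set.univ
  let ν : OuterMeasure Y := OuterMeasure.restrict s (OuterMeasure.comap Φ volume.toOuterMeasure)
  have hν : ν ≤ c • OuterMeasure.mkMetric (· ^ (∑ i, (r i : ℝ))) := by
    rw [← OuterMeasure.mkMetric_smul _ hc hc0]
    exact OuterMeasure.le_mkMetric _ ν 1 one_pos fun t _ => by
      simpa [ν] using volume_image_inter_le_ediam_rpow hΦ t
  calc volume (Φ '' s) = ν s := by simp [ν]
    _ ≤ c * OuterMeasure.mkMetric (· ^ (∑ i, (r i : ℝ))) s := hν s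
    _ = c * μH[∑ i, (r i : ℝ)] s := by rw [OuterMeasure.coe_mkMetric]; rfl

theorem sum_le_dimH_of_volume_image_ne_zero [EMetricSpace Y] {Φ : Y → κ → ℝ} {K r : κ → ℝ≥0}
    {s : Set Y} (hΦ : ∀ i, HolderOnWith (K i) (r i) (fun y => Φ y i) s)
    (hvol : volume (Φ '' s) ≠ 0) : ((∑ i, r i : ℝ≥0) : ℝ≥0∞) ≤ dimH s := by
  borelize Y
  refine le_dimH_of_hausdorffMeasure_ne_zero fun h => hvol ?_
  rw [NNReal.coe_sum] at h
  simpa [h] using volume_image_le_hausdorffMeasure hΦ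

end HausdorffMeasure

open scoped NNReal

lemma edist_le_mul_edist_rpow_iff {X Y : Type*} [PseudoMetricSpace X] [PseudoMetricSpace Y]
    {C r : ℝ≥0} {x x' : X} {y y' : Y} :
    edist x x' ≤ C * edist y y' ^ (r : ℝ) ↔ dist x x' ≤ C * dist y y' ^ (r : ℝ) := by
  rw [edist_nndist, edist_nndist, dist_nndist, dist_nndist,
    ← ENNReal.coe_rpow_of_nonneg _ r.coe_nonneg]
  norm_cast

lemma continuous_of_dist_le_mul_rpow {X Y : Type*} [PseudoMetricSpace X] [PseudoMetricSpace Y]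
    {f : X → Y} {l b : ℝ} (hl : 0 ≤ l) (hb : 0 < b)
    (hf : ∀ x y, dist (f x) (f y) ≤ l * dist x y ^ b) : Continuous f := by
  lift l to ℝ≥0 using hl
  lift b to ℝ≥0 using hb.le
  have hf' : HolderWith l b f := fun x y => edist_le_mul_edist_rpow_iff.2 (hf x y)
  exact hf'.continuous (mod_cast hb)

/-- `f` satisfies `edist x y ≤ C * edist (f x) (f y) ^ r`. This generalizes `AntilipschitzWith`,
the case `r = 1`. With `0 < r` it says that `f` has an `r`-Hölder inverse on its range. -/
def AntiholderWith {X Y : Type*} [PseudoEMetricSpace X] [PseudoEMetricSpace Y] (C r : ℝ≥0)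
    (f : X → Y) : Prop :=
  ∀ x y, edist x y ≤ C * edist (f x) (f y) ^ (r : ℝ)

namespace AntiholderWith

variable {X Y Z : Type*} {C D r s : ℝ≥0}

lemma of_mul_dist_rpow_le [PseudoMetricSpace X] [PseudoMetricSpace Y] {f : X → Y} {l a : ℝ}
    (hl : 0 < l) (ha : 0 < a) (hf : ∀ x y, 1 / l * dist x y ^ a ≤ dist (f x) (f y)) :
    AntiholderWith (l ^ a⁻¹).toNNReal a⁻¹.toNNReal f := fun x y => by
  rw [edist_le_mul_edist_rpow_iff, Real.coe_toNNReal _ (by positivity),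
    Real.coe_toNNReal _ (by positivity), ← Real.mul_rpow hl.le dist_nonneg,
    Real.le_rpow_inv_iff_of_pos dist_nonneg (by positivity) ha, ← inv_mul_le_iff₀ hl, ← one_div]
  exact hf x y

lemma injective [EMetricSpace X] [PseudoEMetricSpace Y] {f : X → Y} (hf : AntiholderWith C r f)
    (hr : 0 < r) : Function.Injective f := fun x y hxy => by
  simpa [hxy, hr] using hf x y

lemma comp_antilipschitzWith [PseudoEMetricSpace X] [PseudoEMetricSpace Y] [PseudoEMetricSpace Z]
    {f : Y → Z} {g : X → Y} (hf : AntiholderWith C r f) (hg : AntilipschitzWith D g) :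
    AntiholderWith (D * C) r (f ∘ g) := fun x y => by
  rw [ENNReal.coe_mul, mul_assoc]
  exact (hg x y).trans (by gcongr; exact hf _ _)

lemma holderOnWith_extend [EMetricSpace X] [PseudoEMetricSpace Y] [PseudoEMetricSpace Z]
    {f : X → Y} (hf : AntiholderWith C r f) (hr : 0 < r) {φ : X → Z} (hφ : HolderWith D s φ)
    (e : Y → Z) : HolderOnWith (D * C ^ (s : ℝ)) (s * r) (Function.extend f φ e) (Set.range f) := by
  rintro _ ⟨x, rfl⟩ _ ⟨y, rfl⟩
  rw [(hf.injective hr).extend_apply, (hf.injective hr).extend_apply]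
  calc edist (φ x) (φ y)
    _ ≤ D * (C * edist (f x) (f y) ^ (r : ℝ)) ^ (s : ℝ) := hφ.edist_le_of_le (hf x y)
    _ = (D * C ^ (s : ℝ) : ℝ≥0) * edist (f x) (f y) ^ ((s * r : ℝ≥0) : ℝ) := by
      rw [ENNReal.mul_rpow_of_nonneg _ _ s.coe_nonneg, ← ENNReal.rpow_mul,
        mul_comm (r : ℝ), ← mul_assoc, ENNReal.coe_mul, ENNReal.coe_rpow_of_nonneg _ s.coe_nonneg,
        NNReal.coe_mul]

lemma exists_pos_forall_le_dist [PseudoMetricSpace X] [PseudoMetricSpace Y] {f : X → Y}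
    (hf : AntiholderWith C r f) (hr : 0 < r) {ε : ℝ} (hε : 0 < ε) :
    ∃ δ > 0, ∀ x y, ε ≤ dist x y → δ ≤ dist (f x) (f y) := by
  have hC : (0 : ℝ) < C + 1 := by positivity
  refine ⟨(ε / (C + 1)) ^ (r : ℝ)⁻¹, by positivity, fun x y hxy => ?_⟩
  have hdist : dist x y ≤ C * dist (f x) (f y) ^ (r : ℝ) := edist_le_mul_edist_rpow_iff.1 (hf x y)
  rw [Real.rpow_inv_le_iff_of_pos (by positivity) dist_nonneg (mod_cast hr), div_le_iff₀' hC]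
  refine hxy.trans (hdist.trans ?_)
  gcongr
  linarith

end AntiholderWith

section ProductCoordinates

variable {K Y ι : Type*}

/-- Coordinates on the range of an embedding `F : K × [0,1]^ι → Y`: the function `φ` on `K` read
off through `F⁻¹` (coordinate `none`, meaningful only on the range of `F`), and the distances to
the images of the faces `x i = 0` (coordinates `some i`). The latter are `1`-Lipschitz, whereas
the coordinates `x i` themselves would only be as Hölder as `F⁻¹` is. -/
noncomputable def faceCoordinates [PseudoMetricSpace Y] (F : K × (ι → unitInterval) → Y)
    (φ : K → ℝ) (y : Y) : Option ι → ℝ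
  | none => Function.extend F (φ ∘ Prod.fst) 0 y
  | some i => Metric.infDist y (F '' {p | p.2 i = 0})

variable [MetricSpace K] [MetricSpace Y] [Fintype ι] {C D r s : ℝ≥0}
  {F : K × (ι → unitInterval) → Y} {φ : K → ℝ}

lemma holderOnWith_faceCoordinates (hF : AntiholderWith C r F) (hr : 0 < r)
    (hφ : HolderWith D s φ) (o : Option ι) :
    HolderOnWith (o.elim (D * C ^ (s : ℝ)) fun _ => 1) (o.elim (s * r) fun _ => 1)
      (fun y => faceCoordinates F φ y o) (Set.range F) := by
  cases o with
  | none =>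
    have hφ' : HolderWith D s (φ ∘ Prod.fst : K × (ι → unitInterval) → ℝ) := by
      simpa using hφ.comp (holderWith_one.2 LipschitzWith.prod_fst)
    exact hF.holderOnWith_extend hr hφ' 0
  | some i =>
    exact (holderWith_one.2 (Metric.lipschitz_infDist_pt _)).holderOnWith _

lemma exists_pos_forall_le_infDist_face (hF : AntiholderWith C r F) (hr : 0 < r) :
    ∃ δ > 0, ∀ p i, p.2 i = 1 → δ ≤ Metric.infDist (F p) (F '' {q | q.2 i = 0}) := by
  obtain ⟨δ, hδ, hsep⟩ := hF.exists_pos_forall_le_dist hr one_pos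
  refine ⟨δ, hδ, fun p i hp => ?_⟩
  have hne : (F '' {q | q.2 i = 0}).Nonempty := ⟨_, (p.1, 0), rfl, rfl⟩
  rw [Metric.le_infDist hne]
  rintro _ ⟨q, hq, rfl⟩
  refine hsep p q ?_
  calc (1 : ℝ) = dist (p.2 i) (q.2 i) := by
        rw [hp, show q.2 i = 0 from hq]; simp [Subtype.dist_eq]
    _ ≤ dist p.2 q.2 := dist_le_pi_dist _ _ i
    _ ≤ dist p q := le_max_right _ _

lemma exists_pos_pi_Ioo_subset_image_faceCoordinates (hF : AntiholderWith C r F) (hr : 0 < r)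
    (hFc : Continuous F) (hφ : Set.Icc 0 1 ⊆ Set.range φ) :
    ∃ ε > 0, Set.univ.pi (fun _ => Set.Ioo 0 ε) ⊆ faceCoordinates F φ '' Set.range F := by
  obtain ⟨δ, hδ, hface⟩ := exists_pos_forall_le_infDist_face hF hr
  refine ⟨min 1 δ, lt_min one_pos hδ, fun z hz => ?_⟩
  simp only [Set.mem_univ_pi, Set.mem_Ioo, lt_min_iff] at hz
  obtain ⟨c, hc⟩ := hφ ⟨(hz none).1.le, (hz none).2.1.le⟩
  obtain ⟨x, hx⟩ := exists_forall_infDist_eq (G := fun x => F (c, x))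
    (A := fun i => F '' {p | p.2 i = 0}) (δ := δ) (z := fun i => z (some i)) (by fun_prop)
    (fun x i hx => ⟨(c, x), hx, rfl⟩) (fun x i => hface (c, x) i)
    (fun i => ⟨(hz (some i)).1.le, (hz (some i)).2.2.le⟩)
  refine ⟨F (c, x), ⟨(c, x), rfl⟩, funext fun o => ?_⟩
  cases o with
  | none => exact ((hF.injective hr).extend_apply _ _ _).trans hc
  | some i => exact hx i

theorem add_card_le_dimH_range (hF : AntiholderWith C r F) (hr : 0 < r) (hFc : Continuous F)
    (hφ : HolderWith D s φ) (hφ_range : Set.Icc 0 1 ⊆ Set.range φ) :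
    ((s * r + Fintype.card ι : ℝ≥0) : ℝ≥0∞) ≤ dimH (Set.range F) := by
  obtain ⟨ε, hε, hbox⟩ := exists_pos_pi_Ioo_subset_image_faceCoordinates hF hr hFc hφ_range
  have hbox_pos : 0 < MeasureTheory.volume (Set.univ.pi fun _ : Option ι => Set.Ioo 0 ε) :=
    (isOpen_set_pi Set.finite_univ fun _ _ => isOpen_Ioo).measure_pos _
      (Set.univ_pi_nonempty_iff.2 fun _ => Set.nonempty_Ioo.2 hε)
  have hdim := sum_le_dimH_of_volume_image_ne_zero (holderOnWith_faceCoordinates hF hr hφ)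
    (hbox_pos.trans_le (MeasureTheory.measure_mono hbox)).ne'
  simpa [Fintype.sum_option] using hdim

end ProductCoordinates

section CantorFunction

lemma inv_pow_succ_le_ofDigits_sub_ofDigits {b : ℕ} {x y : ℕ → Fin b} {k : ℕ}
    (hlt : ∀ i < k, x i = y i) (hk : (x k : ℕ) + 2 ≤ y k) :
    ((b : ℝ) ^ (k + 1))⁻¹ ≤ Real.ofDigits y - Real.ofDigits x := by
  have hsum : ∑ i ∈ Finset.range k, Real.ofDigitsTerm x i =
      ∑ i ∈ Finset.range k, Real.ofDigitsTerm y i :=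
    Finset.sum_congr rfl fun i hi => by
      rw [Real.ofDigitsTerm, Real.ofDigitsTerm, hlt i (Finset.mem_range.1 hi)]
  have hk' : (x k : ℝ) + 2 ≤ y k := mod_cast hk
  have hx := Real.ofDigits_le_one fun i => x (i + (k + 1))
  have hy := Real.ofDigits_nonneg fun i => y (i + (k + 1))
  have hpow : 0 ≤ ((b : ℝ) ^ (k + 1))⁻¹ := by positivity
  rw [Real.ofDigits_eq_sum_add_ofDigits x (k + 1), Real.ofDigits_eq_sum_add_ofDigits y (k + 1),
    Finset.sum_range_succ, Finset.sum_range_succ, hsum, Real.ofDigitsTerm, Real.ofDigitsTerm]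
  have hdigits : ((b : ℝ) ^ (k + 1))⁻¹ * 1 ≤ ((b : ℝ) ^ (k + 1))⁻¹ * (y k - x k +
      (Real.ofDigits (fun i => y (i + (k + 1))) - Real.ofDigits fun i => x (i + (k + 1)))) :=
    mul_le_mul_of_nonneg_left (by linarith) hpow
  linarith

/-- The Cantor function `C → [0,1]`, reading the ternary digits `0`, `2` as binary digits
`0`, `1`. -/
noncomputable def cantorFunction (x : cantorSet) : ℝ :=
  Real.ofDigits fun i => cond (cantorSetEquivNatToBool x i) (1 : Fin 2) 0

lemma Icc_subset_range_cantorFunction : Set.Icc 0 1 ⊆ Set.range cantorFunction := by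
  intro t ht
  obtain ⟨d, -, rfl⟩ := Real.ofDigits_SurjOn (b := 2) one_lt_two ht
  refine ⟨cantorSetEquivNatToBool.symm fun i => d i = 1, ?_⟩
  rw [cantorFunction, Equiv.apply_symm_apply]
  congr 1
  ext i
  generalize d i = e
  fin_cases e <;> rfl

lemma inv_pow_firstDiff_le_dist_cantorSet {x y : cantorSet} (hxy : x ≠ y) :
    ((3 : ℝ) ^ (PiNat.firstDiff (cantorSetEquivNatToBool x) (cantorSetEquivNatToBool y) + 1))⁻¹ ≤
      dist x y := by
  have coe_eq (z : cantorSet) :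
      (z : ℝ) = Real.ofDigits fun i => cond (cantorSetEquivNatToBool z i) (2 : Fin 3) 0 :=
    congrArg Subtype.val (cantorSetEquivNatToBool.symm_apply_apply z).symm
  rw [Subtype.dist_eq, Real.dist_eq, coe_eq x, coe_eq y]
  set u := cantorSetEquivNatToBool x
  set v := cantorSetEquivNatToBool y
  have huv : u ≠ v := cantorSetEquivNatToBool.injective.ne hxy
  have hne := PiNat.apply_firstDiff_ne huv
  have hlt : ∀ i < PiNat.firstDiff u v, u i = v i := fun i hi => PiNat.apply_eq_of_lt_firstDiff hi
  cases hu : u (PiNat.firstDiff u v) <;> cases hv : v (PiNat.firstDiff u v)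
  · simp [hu, hv] at hne
  · rw [abs_sub_comm]
    exact (inv_pow_succ_le_ofDigits_sub_ofDigits (fun i hi => by rw [hlt i hi])
      (by simp [hu, hv])).trans (le_abs_self _)
  · exact (inv_pow_succ_le_ofDigits_sub_ofDigits (fun i hi => by rw [hlt i hi])
      (by simp [hu, hv])).trans (le_abs_self _)
  · simp [hu, hv] at hne

theorem holderWith_cantorFunction : HolderWith 2 (Real.logb 3 2).toNNReal cantorFunction := by
  intro x y
  rw [edist_le_mul_edist_rpow_iff,
    Real.coe_toNNReal _ (Real.logb_nonneg (by norm_num) (by norm_num))]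
  rcases eq_or_ne x y with rfl | hxy
  · rw [dist_self]
    positivity
  set k := PiNat.firstDiff (cantorSetEquivNatToBool x) (cantorSetEquivNatToBool y)
  have hpow : ((3 : ℝ) ^ (k + 1)) ^ Real.logb 3 2 = 2 ^ (k + 1) := by
    rw [← Real.rpow_pow_comm (by norm_num),
      Real.rpow_logb (by norm_num) (by norm_num) (by norm_num)]
  calc dist (cantorFunction x) (cantorFunction y)
    _ ≤ (((2 : ℕ) : ℝ) ^ k)⁻¹ := Real.abs_ofDigits_sub_ofDigits_le fun i hi => by
      rw [PiNat.apply_eq_of_lt_firstDiff hi]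
    _ = 2 * (((3 : ℝ) ^ (k + 1))⁻¹) ^ Real.logb 3 2 := by
      rw [Real.inv_rpow (by positivity), hpow, pow_succ, Nat.cast_ofNat]
      field_simp
    _ ≤ 2 * dist x y ^ Real.logb 3 2 := by
      gcongr
      · exact Real.logb_nonneg (by norm_num) (by norm_num)
      · exact inv_pow_firstDiff_le_dist_cantorSet hxy

end CantorFunction

section CantorCube

variable {n : ℕ}

/-- The parametrization of `C × [0,1]^n ⊆ ℝ^{n+1}` by the abstract product. -/
def cantorCubeMk (p : cantorSet × (Fin n → unitInterval)) : cantorCube n :=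
  ⟨WithLp.toLp 2 (Fin.cons p.1 fun k => p.2 k), p.1.2, fun i hi => by
    obtain ⟨k, rfl⟩ := Fin.exists_succ_eq.2 hi
    exact (p.2 k).2⟩

lemma continuous_cantorCubeMk : Continuous (cantorCubeMk (n := n)) := by
  refine ((PiLp.continuous_toLp 2 _).comp (continuous_pi fun i => ?_)).subtype_mk _
  cases i using Fin.cases with
  | zero => simpa using! by fun_prop
  | succ k => simpa using! by fun_prop

lemma antilipschitzWith_cantorCubeMk : AntilipschitzWith 1 (cantorCubeMk (n := n)) := by
  intro p q
  have coord_le (i : Fin (n + 1)) : edist ((cantorCubeMk p).1 i) ((cantorCubeMk q).1 i) ≤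
      edist (cantorCubeMk p) (cantorCubeMk q) := PiLp.edist_apply_le _ _ i
  rw [ENNReal.coe_one, one_mul]
  exact max_le (coord_le 0) (edist_pi_le_iff.2 fun k => coord_le k.succ)

end CantorCube

theorem statement4_general (n : ℕ) {Y : Type*} [MetricSpace Y] {l a : ℝ} (hl : 0 < l) (ha : 0 < a)
    {f : cantorCube n → Y} (hfc : Continuous f)
    (hf : ∀ x y, 1 / l * dist x y ^ a ≤ dist (f x) (f y)) :
    ENNReal.ofReal (n + Real.log 2 / (a * Real.log 3)) ≤ dimH (Set.range f) ∧
      (n : ℝ≥0∞) < dimH (Set.range f) := by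
  have hlog : 0 < Real.log 2 / (a * Real.log 3) := by positivity
  have hexponent : ENNReal.ofReal (n + Real.log 2 / (a * Real.log 3)) =
      (((Real.logb 3 2).toNNReal * a⁻¹.toNNReal + Fintype.card (Fin n) : ℝ≥0) : ℝ≥0∞) := by
    rw [ENNReal.ofReal, Real.toNNReal_add n.cast_nonneg hlog.le, Real.toNNReal_natCast,
      Fintype.card_fin, add_comm,
      ← Real.toNNReal_mul (Real.logb_nonneg (by norm_num) (by norm_num)), Real.logb,
      ← div_eq_mul_inv, div_div, mul_comm a]
  have hF := (AntiholderWith.of_mul_dist_rpow_le hl ha hf).comp_antilipschitzWith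
    antilipschitzWith_cantorCubeMk
  have hdim : ENNReal.ofReal (n + Real.log 2 / (a * Real.log 3)) ≤ dimH (Set.range f) :=
    calc ENNReal.ofReal (n + Real.log 2 / (a * Real.log 3))
      _ ≤ dimH (Set.range (f ∘ cantorCubeMk)) := hexponent ▸ add_card_le_dimH_range hF
        (by positivity) (hfc.comp continuous_cantorCubeMk) holderWith_cantorFunction
        Icc_subset_range_cantorFunction
      _ ≤ dimH (Set.range f) := dimH_mono (Set.range_comp_subset_range _ _)
  refine ⟨hdim, lt_of_lt_of_le ?_ hdim⟩
  rw [← ENNReal.ofReal_natCast, ENNReal.ofReal_lt_ofReal_iff (by positivity)]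
  exact lt_add_of_pos_right _ hlog

/-- For `n ≥ 1`, if `Y` is a metric space and
`f : C × [0,1]^n → Y` is a `(l, a, b)`-bi-Hölder homeomorphism, then
`dimH Y ≥ n + log 2 / (a · log 3) > n`. -/
theorem statement4 (n : ℕ) (hn : 1 ≤ n) {Y : Type*} [MetricSpace Y]
    (l a b : ℝ) (hl : 0 < l) (ha : 0 < a) (hb : 0 < b)
    (f : ↥(cantorCube n) → Y) (hsurj : Function.Surjective f)
    (hf : ∀ x y : ↥(cantorCube n),
      (1 / l) * dist x y ^ a ≤ dist (f x) (f y) ∧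
        dist (f x) (f y) ≤ l * dist x y ^ b) :
    ENNReal.ofReal ((n : ℝ) + Real.log 2 / (a * Real.log 3)) ≤ dimH (Set.univ : Set Y) ∧
      (n : ℝ≥0∞) < dimH (Set.univ : Set Y) := by
  have hfc : Continuous f := continuous_of_dist_le_mul_rpow hl.le hb fun x y => (hf x y).2
  exact hsurj.range_eq ▸ statement4_general n hl ha hfc fun x y => (hf x y).1
end

section
/- Let X be a metric space and 𝒰 a finite open cover of X with multiplicity at most m+1 whose members are all proper subsets of X. Then for all x, y ∈ X, |Σ_{U∈𝒰} d(x, X∖U) − Σ_{U∈𝒰} d(y, X∖U)| ≤ 2(m+1)·d(x,y). -/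
open scoped Classical

/-!
Write `F x = ∑ U ∈ 𝒰, d(x, X∖U)`. In `F x - F y`, a member `U` not containing `x` contributes
`-d(y, X∖U) ≤ 0`, so only the at most `m + 1` members containing `x` matter, and each of them
contributes at most `d(x, y)`. Exchanging `x` and `y` shows that `F` is even `(m + 1)`-Lipschitz:
the one-sided estimate is what avoids counting the members at both points.
-/

open scoped NNReal

section

variable {ι X : Type*} [PseudoMetricSpace X] {s : Finset ι} {n : ℕ}

theorem lipschitzWith_sum_of_card_ne_zero_le {K : ℝ≥0} {f : ι → X → ℝ}
    (hf : ∀ i ∈ s, LipschitzWith K (f i)) (hf_nonneg : ∀ i ∈ s, ∀ x, 0 ≤ f i x)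
    (hcard : ∀ x, (s.filter fun i => f i x ≠ 0).card ≤ n) :
    LipschitzWith (n * K) fun x => ∑ i ∈ s, f i x := by
  refine LipschitzWith.of_le_add_mul _ fun x y => ?_
  let t := s.filter fun i => f i x ≠ 0
  have hts : t ⊆ s := s.filter_subset _
  calc
    ∑ i ∈ s, f i x = ∑ i ∈ t, f i x := (Finset.sum_filter_ne_zero s).symm
    _ ≤ ∑ i ∈ t, (f i y + K * dist x y) :=
      Finset.sum_le_sum fun i hi => (hf i (hts hi)).le_add_mul x y
    _ = ∑ i ∈ t, f i y + t.card * (K * dist x y) := by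
      rw [Finset.sum_add_distrib, Finset.sum_const, nsmul_eq_mul]
    _ ≤ ∑ i ∈ s, f i y + n * (K * dist x y) := by
      gcongr
      · exact fun i hi _ => hf_nonneg i hi y
      · exact hcard x
    _ = ∑ i ∈ s, f i y + ↑(n * K) * dist x y := by
      push_cast
      ring

theorem statement11_general {U : ι → Set X} (_hproper : ∀ i ∈ s, U i ≠ Set.univ)
    (hmult : ∀ x, (s.filter fun i => x ∈ U i).card ≤ n) :
    LipschitzWith n fun x => ∑ i ∈ s, Metric.infDist x (U i)ᶜ := by
  have mem_of_infDist_ne_zero (x : X) (i : ι) (h : Metric.infDist x (U i)ᶜ ≠ 0) : x ∈ U i :=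
    not_not.mp fun hx => h (Metric.infDist_zero_of_mem hx)
  have hcard (x : X) : (s.filter fun i => Metric.infDist x (U i)ᶜ ≠ 0).card ≤ n :=
    (Finset.card_le_card <| Finset.monotone_filter_right s fun i _ =>
      mem_of_infDist_ne_zero x i).trans (hmult x)
  simpa only [mul_one] using lipschitzWith_sum_of_card_ne_zero_le
    (fun i _ => Metric.lipschitz_infDist_pt (U i)ᶜ) (fun _ _ _ => Metric.infDist_nonneg) hcard

end

/-- If `𝒰` is a finite open cover of a metric space `X` with multiplicity at
most `m+1`, all of whose members are proper subsets of `X`, then the function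
`x ↦ ∑_{U ∈ 𝒰} d(x, X∖U)` is `2(m+1)`-Lipschitz. -/
theorem statement11 {X : Type*} [MetricSpace X] (m : ℕ) (𝒰 : Finset (Set X))
    (hopen : ∀ U ∈ 𝒰, IsOpen U)
    (hcover : ∀ x : X, ∃ U ∈ 𝒰, x ∈ U)
    (hproper : ∀ U ∈ 𝒰, U ≠ Set.univ)
    (hmult : ∀ x : X, (𝒰.filter fun U => x ∈ U).card ≤ m + 1)
    (x y : X) :
    |(∑ U ∈ 𝒰, Metric.infDist x Uᶜ) - ∑ U ∈ 𝒰, Metric.infDist y Uᶜ| ≤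
      2 * ((m : ℝ) + 1) * dist x y := by
  refine ((statement11_general (U := id) hproper hmult).dist_le_mul x y).trans ?_
  push_cast
  gcongr
  linarith
end
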